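/- With the setup below and h_L a function as described: for every integer l ≥ 2 there exist constants c_1 > 0, 0 < c_2 ≤ 1 and a threshold N_1, all depending only on F, L, l and c_0, such that if N ≥ N_1, δ > (log P)^{−100}, and B is the image in ℤ/Pℤ of a set of integers contained in [−P/4, P/4] with |B| ≥ (log P)^{k+101}, then Λ_L(f_{A'} * f_B) ≥ c_1 · h_L(c_2 · δ^{l/(l−1)}) · P^{s−1}. -/

import Mathlib

/-- The primorial of a real number `z`: the product of all primes `p ≤ z`. -/
noncomputable def primor (z : ℝ) : ℕ :=
  ∏ p ∈ (Finset.range (⌊z⌋₊ + 1)).filter Nat.Prime, p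

/-- `S_F(N, z)`: the set of natural numbers `n ≤ N` with `gcd(F(n), P(z)) = 1`. -/
noncomputable def SFset (F : ℤ → ℤ) (N : ℕ) (z : ℝ) : Finset ℕ :=
  (Finset.Icc 1 N).filter (fun n => Int.gcd (F n) (primor z) = 1)

/-- `A_b = {n : b + nM ∈ A}` (automatically contained in `[0, N]`). -/
def Abset (A : Finset ℕ) (N M b : ℕ) : Finset ℕ :=
  (Finset.range (N + 1)).filter (fun n => b + n * M ∈ A)

/-- `f_C = d(C)⁻¹ · 1_C`, where `d(C) = |C|/P`. -/
noncomputable def fCfun {P : ℕ} (C : Finset (ZMod P)) : ZMod P → ℝ :=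
  fun n => ((P : ℝ) / (C.card : ℝ)) * (if n ∈ C then 1 else 0)

/-- Convolution `(f*g)(n) = P⁻¹ ∑_y f(n−y) g(y)` on `ℤ/Pℤ`. -/
noncomputable def convP {P : ℕ} [Fact P.Prime] (f g : ZMod P → ℝ) : ZMod P → ℝ :=
  fun n => (1 / (P : ℝ)) * ∑ y : ZMod P, f (n - y) * g y

/-- `Λ_L(f) = ∑_{c₁n₁+⋯+cₛnₛ=0} ∏ f(nᵢ)`. -/
noncomputable def LamL {P : ℕ} [Fact P.Prime] {s : ℕ} (cc : Fin s → ℤ)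
    (f : ZMod P → ℝ) : ℝ :=
  ∑ n ∈ Finset.univ.filter
      (fun n : Fin s → ZMod P => ∑ i, (cc i : ZMod P) * n i = 0),
    ∏ i, f (n i)

/-!
Let `ρ = (log log N / log N)^k` and `f = f_{A'} * f_B`, whose mean is `1`. The `l`-th moment of `f`
counts pairs of a point `n` and an `l`-element subset `T` of `B` with `n - T` inside `A_{b₀}`. For a
fixed `T` such `n` are sifted by the `k * l` linear forms `a_i (b₀ + (n - x) M) + b_i`, `x ∈ T`, so
Selberg's sieve bounds their number by `O(P ρ^l)`. The small primes divide `M` and do not sieve, and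
this costs no more than the factor `(log log N)^(k * l)`. Only primes dividing some `M (x - y)` or
one of the fixed determinants `a_i b_j - b_i a_j` can make two of the forms proportional modulo `p`;
beyond `log N` these have bounded total reciprocal mass. As `|B| ≥ ρ⁻¹`, the `l`-th moment of `f` is
`O(δ^(-l))`, and Hölder's inequality shows that `f ≥ 1/2` on a set of density
`≫ δ^(l / (l - 1))`. The function `h_L` then counts the solutions of `L` inside this set.
-/

open Finset Filter

/-! ### Mertens estimates -/

section Mertens

theorem prod_primesLE_pow_div_dvd_factorial (n : ℕ) :
    ∏ p ∈ n.primesLE, p ^ (n / p) ∣ n.factorial := by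
  refine prod_dvd_of_isRelPrime (fun p hp q hq hpq => ?_) fun p hp => ?_
  · exact Nat.coprime_iff_isRelPrime.1 <| Nat.coprime_pow_primes _ _
      (Nat.prime_of_mem_primesLE hp) (Nat.prime_of_mem_primesLE hq) hpq
  · have hp := Nat.prime_of_mem_primesLE hp
    refine (hp.pow_dvd_factorial_iff (b := Nat.log p n + 2) (by omega)).2 ?_
    simpa using single_le_sum (f := fun i => n / p ^ i) (fun _ _ => Nat.zero_le _)
      (mem_Ico.2 ⟨le_rfl, by omega⟩ : 1 ∈ Ico 1 (Nat.log p n + 2))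

theorem sum_primesLE_div_mul_log_le (n : ℕ) :
    ∑ p ∈ n.primesLE, ((n / p : ℕ) : ℝ) * Real.log p ≤ n * Real.log n := by
  have hpos : ∀ p ∈ n.primesLE, (p : ℝ) ^ (n / p) ≠ 0 := fun p hp =>
    pow_ne_zero _ (Nat.cast_ne_zero.2 (Nat.prime_of_mem_primesLE hp).ne_zero)
  have hle : ∏ p ∈ n.primesLE, p ^ (n / p) ≤ n ^ n :=
    (Nat.le_of_dvd n.factorial_pos (prod_primesLE_pow_div_dvd_factorial n)).trans
      n.factorial_le_pow
  calc ∑ p ∈ n.primesLE, ((n / p : ℕ) : ℝ) * Real.log p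
      = Real.log (∏ p ∈ n.primesLE, (p : ℝ) ^ (n / p)) := by
        simp only [Real.log_prod hpos, Real.log_pow]
    _ ≤ Real.log ((n : ℝ) ^ n) :=
        Real.log_le_log (prod_pos fun p hp => (hpos p hp).symm.lt_of_le (by positivity))
          (mod_cast hle)
    _ = n * Real.log n := Real.log_pow n n

theorem sum_primesLE_log_div_le (n : ℕ) :
    ∑ p ∈ n.primesLE, Real.log p / p ≤ Real.log n + Real.log 4 := by
  rcases n.eq_zero_or_pos with rfl | hn
  · simp [Real.log_nonneg]
  have hterm : ∀ p ∈ n.primesLE,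
      n * (Real.log p / p) ≤ ((n / p : ℕ) : ℝ) * Real.log p + Real.log p := fun p _ => by
    have hfloor : (n : ℝ) / p ≤ ((n / p : ℕ) : ℝ) + 1 := by
      rw [← Nat.floor_div_eq_div (K := ℝ)]
      exact (Nat.lt_floor_add_one _).le
    calc n * (Real.log p / p) = n / p * Real.log p := by ring
      _ ≤ (((n / p : ℕ) : ℝ) + 1) * Real.log p := by
          gcongr
      _ = _ := by ring
  have htheta : ∑ p ∈ n.primesLE, Real.log p ≤ Real.log 4 * n :=
    (Chebyshev.theta_eq_sum_primesLE_log n).symm.trans_le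
      (by simpa using Chebyshev.theta_le_log4_mul_x n.cast_nonneg)
  have hsum := sum_le_sum hterm
  rw [← mul_sum, sum_add_distrib] at hsum
  refine le_of_mul_le_mul_left ?_ (Nat.cast_pos.2 hn)
  linarith [sum_primesLE_div_mul_log_le n]

/-- The completely multiplicative function `n ↦ n ^ (-s)`, whose Euler products over the primes up
to `n` yield both bounds in Mertens' second theorem. -/
noncomputable def natRpowNegHom (s : ℝ) : ℕ →* ℝ where
  toFun n := (n : ℝ) ^ (-s)
  map_one' := by simp
  map_mul' m n := by rw [Nat.cast_mul, Real.mul_rpow m.cast_nonneg n.cast_nonneg]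

theorem natRpowNegHom_apply (s : ℝ) (n : ℕ) : natRpowNegHom s n = (n : ℝ) ^ (-s) := rfl

theorem natRpowNegHom_nonneg (s : ℝ) (n : ℕ) : 0 ≤ natRpowNegHom s n :=
  Real.rpow_nonneg n.cast_nonneg _

theorem natRpowNegHom_lt_one {s : ℝ} (hs : 0 < s) {p : ℕ} (hp : p.Prime) :
    natRpowNegHom s p < 1 :=
  Real.rpow_lt_one_of_one_lt_of_neg (mod_cast hp.one_lt) (neg_neg_of_pos hs)

theorem log_prod_primesLE_one_sub_inv {s : ℝ} (hs : 0 < s) (n : ℕ) :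
    Real.log (∏ p ∈ n.primesLE, (1 - natRpowNegHom s p)⁻¹) =
      ∑ p ∈ n.primesLE, -Real.log (1 - natRpowNegHom s p) := by
  rw [Real.log_prod fun p hp => inv_ne_zero
    (sub_pos.2 (natRpowNegHom_lt_one hs (Nat.prime_of_mem_primesLE hp))).ne']
  simp only [Real.log_inv]

theorem tsum_natRpowNegHom_le {s : ℝ} (hs : 1 < s) :
    ∑' n, natRpowNegHom s n ≤ 1 + 1 / (s - 1) := by
  have hsum : Summable (natRpowNegHom s) := Real.summable_nat_rpow.2 (by linarith)
  have hzeta := ZetaAsymptotics.zeta_limit_aux1 hs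
  have hterm : 0 ≤ ZetaAsymptotics.termTSum s :=
    tsum_nonneg fun n => ZetaAsymptotics.term_nonneg _ _
  have hshift : ∑' n, natRpowNegHom s n = ∑' n : ℕ, 1 / (n + 1 : ℝ) ^ s := by
    rw [hsum.tsum_eq_zero_add, natRpowNegHom_apply, Nat.cast_zero,
      Real.zero_rpow (by linarith), zero_add]
    refine tsum_congr fun n => ?_
    rw [natRpowNegHom_apply, Real.rpow_neg n.succ.cast_nonneg, one_div, Nat.cast_succ]
  nlinarith

theorem sum_primesLE_natRpowNegHom_le {s : ℝ} (hs : 1 < s) (n : ℕ) :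
    ∑ p ∈ n.primesLE, natRpowNegHom s p ≤ Real.log (1 + 1 / (s - 1)) := by
  have hsum : Summable (natRpowNegHom s) := Real.summable_nat_rpow.2 (by linarith)
  have hpos : ∀ p ∈ n.primesLE, 0 < 1 - natRpowNegHom s p := fun p hp =>
    sub_pos.2 (natRpowNegHom_lt_one (by linarith) (Nat.prime_of_mem_primesLE hp))
  calc ∑ p ∈ n.primesLE, natRpowNegHom s p
      ≤ ∑ p ∈ n.primesLE, -Real.log (1 - natRpowNegHom s p) :=
        sum_le_sum fun p hp => by linarith [Real.log_le_sub_one_of_pos (hpos p hp)]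
    _ = Real.log (∏ p ∈ n.primesLE, (1 - natRpowNegHom s p)⁻¹) :=
        (log_prod_primesLE_one_sub_inv (by linarith) n).symm
    _ ≤ Real.log (1 + 1 / (s - 1)) := by
        refine Real.log_le_log (prod_pos fun p hp => inv_pos.2 (hpos p hp)) ?_
        rw [Nat.primesLE, EulerProduct.prod_primesBelow_geometric_eq_tsum_smoothNumbers hsum]
        exact (hsum.tsum_subtype_le _ _ (natRpowNegHom_nonneg s)).trans (tsum_natRpowNegHom_le hs)

theorem one_div_le_rpow_add {x : ℝ} (hx : 0 < x) (ε : ℝ) :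
    1 / x ≤ x ^ (-(1 + ε)) + ε * (Real.log x / x) := by
  have hexp : 1 - ε * Real.log x ≤ x ^ (-ε) := by
    rw [Real.rpow_def_of_pos hx]
    linarith [Real.add_one_le_exp (Real.log x * -ε)]
  calc 1 / x = x⁻¹ * (1 - ε * Real.log x) + ε * (Real.log x / x) := by ring
    _ ≤ x⁻¹ * x ^ (-ε) + ε * (Real.log x / x) := by gcongr
    _ = _ := by rw [neg_add, Real.rpow_add hx, Real.rpow_neg_one]

theorem sum_primesLE_one_div_le {n : ℕ} (hn : 3 ≤ n) :
    ∑ p ∈ n.primesLE, (1 : ℝ) / p ≤ Real.log (Real.log n) + 4 := by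
  have hlog : 1 ≤ Real.log n := by
    rw [Real.le_log_iff_exp_le (by positivity)]
    have : (3 : ℝ) ≤ n := mod_cast hn
    linarith [Real.exp_one_lt_d9]
  set ε : ℝ := 1 / Real.log n with hε
  have hε0 : 0 < ε := by positivity
  have hhom : ∑ p ∈ n.primesLE, natRpowNegHom (1 + ε) p ≤ Real.log (Real.log n) + 1 := by
    calc _ ≤ Real.log (1 + 1 / (1 + ε - 1)) := sum_primesLE_natRpowNegHom_le (by linarith) n
      _ = Real.log (1 + Real.log n) := by rw [add_sub_cancel_left, hε, one_div_one_div]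
      _ ≤ Real.log (2 * Real.log n) := Real.log_le_log (by linarith) (by linarith)
      _ = Real.log 2 + Real.log (Real.log n) := Real.log_mul two_ne_zero (by linarith)
      _ ≤ _ := by linarith [Real.log_two_lt_d9]
  have hlog_four : Real.log 4 ≤ 2 := by
    rw [show (4 : ℝ) = 2 ^ 2 by norm_num, Real.log_pow]
    push_cast
    linarith [Real.log_two_lt_d9]
  have hfirst : ε * ∑ p ∈ n.primesLE, Real.log p / p ≤ 3 := by
    calc _ ≤ ε * (Real.log n + Real.log 4) := by gcongr; exact sum_primesLE_log_div_le n
      _ ≤ 3 := by rw [hε, one_div, inv_mul_le_iff₀ (by linarith)]; linarith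
  have hterm := sum_le_sum fun p hp =>
    one_div_le_rpow_add (Nat.cast_pos.2 (Nat.prime_of_mem_primesLE (n := n) hp).pos) ε
  rw [sum_add_distrib, ← mul_sum] at hterm
  simp only [natRpowNegHom_apply] at hhom
  linarith

theorem log_succ_le_prod_primesLE (n : ℕ) :
    Real.log ((n + 1 : ℕ) : ℝ) ≤ ∏ p ∈ n.primesLE, (1 - natRpowNegHom 1 p)⁻¹ := by
  have hnorm : ∀ {p : ℕ}, p.Prime → ‖natRpowNegHom 1 p‖ < 1 := fun hp => by
    rw [Real.norm_of_nonneg (natRpowNegHom_nonneg 1 _)]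
    exact natRpowNegHom_lt_one one_pos hp
  obtain ⟨-, hprod⟩ :=
    EulerProduct.summable_and_hasSum_smoothNumbers_prod_primesBelow_geometric hnorm (n + 1)
  have hsmooth : ∀ m ∈ Icc 1 n, m ∈ (n + 1).smoothNumbers := fun m hm =>
    Nat.mem_smoothNumbers_of_lt (mem_Icc.1 hm).1 (Nat.lt_succ_of_le (mem_Icc.1 hm).2)
  calc Real.log ((n + 1 : ℕ) : ℝ) ≤ ∑ m ∈ Icc 1 n, natRpowNegHom 1 m := by
        simpa [harmonic_eq_sum_Icc, natRpowNegHom_apply, Real.rpow_neg_one]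
          using log_add_one_le_harmonic n
    _ = ∑ m ∈ (Icc 1 n).subtype (· ∈ (n + 1).smoothNumbers), natRpowNegHom 1 m := by
        rw [sum_subtype_eq_sum_filter (f := natRpowNegHom 1), filter_true_of_mem hsmooth]
    _ ≤ _ := sum_le_hasSum _ (fun m _ => natRpowNegHom_nonneg 1 m) hprod

theorem neg_log_one_sub_inv_le {x : ℝ} (hx : 2 ≤ x) :
    -Real.log (1 - x⁻¹) ≤ 1 / x + 2 * (x ^ 2)⁻¹ := by
  have hpos : 0 < 1 - x⁻¹ := sub_pos.2 (inv_lt_one_of_one_lt₀ (by linarith))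
  calc -Real.log (1 - x⁻¹) = Real.log (1 - x⁻¹)⁻¹ := (Real.log_inv _).symm
    _ ≤ (1 - x⁻¹)⁻¹ - 1 := Real.log_le_sub_one_of_pos (inv_pos.2 hpos)
    _ = 1 / (x - 1) := by field_simp [show x - 1 ≠ 0 by linarith]; ring
    _ ≤ 1 / x + 2 * (x ^ 2)⁻¹ := by
        rw [div_le_iff₀ (by linarith)]
        have : (1 / x + 2 * (x ^ 2)⁻¹) * (x - 1) = 1 + (x - 2) / x ^ 2 := by field_simp; ring
        rw [this]
        linarith [div_nonneg (sub_nonneg.2 hx) (sq_nonneg x)]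

theorem log_log_succ_sub_two_le_sum_primesLE {n : ℕ} (hn : 1 ≤ n) :
    Real.log (Real.log ((n + 1 : ℕ) : ℝ)) - 2 ≤ ∑ p ∈ n.primesLE, (1 : ℝ) / p := by
  have hlog : 0 < Real.log ((n + 1 : ℕ) : ℝ) := Real.log_pos (mod_cast Nat.lt_succ_of_le hn)
  have hsquares : ∑ p ∈ n.primesLE, ((p : ℝ) ^ 2)⁻¹ ≤ 1 := by
    calc _ ≤ ∑ p ∈ Ioo 1 (n + 1), ((p : ℝ) ^ 2)⁻¹ :=
          sum_le_sum_of_subset_of_nonneg (fun p hp => mem_Ioo.2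
            ⟨Nat.one_lt_of_mem_primesLE hp, Nat.lt_succ_of_le (Nat.le_of_mem_primesLE hp)⟩)
            fun _ _ _ => by positivity
      _ ≤ 1 := by simpa [one_add_one_eq_two] using sum_Ioo_inv_sq_le (α := ℝ) 1 (n + 1)
  have hterm : ∑ p ∈ n.primesLE, -Real.log (1 - natRpowNegHom 1 p) ≤
      ∑ p ∈ n.primesLE, (1 / (p : ℝ) + 2 * ((p : ℝ) ^ 2)⁻¹) := sum_le_sum fun p hp => by
    rw [natRpowNegHom_apply, Real.rpow_neg_one]
    exact neg_log_one_sub_inv_le (mod_cast Nat.two_le_of_mem_primesLE hp)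
  rw [← log_prod_primesLE_one_sub_inv one_pos, sum_add_distrib, ← mul_sum] at hterm
  linarith [Real.log_le_log hlog (log_succ_le_prod_primesLE n)]

end Mertens

/-! ### The Selberg sieve -/

section PeriodicSums

theorem sum_range_natCast_zmod (q : ℕ) [NeZero q] (φ : ZMod q → ℝ) :
    ∑ n ∈ range q, φ n = ∑ x, φ x := by
  obtain ⟨q, rfl⟩ := Nat.exists_eq_succ_of_ne_zero (NeZero.ne q)
  rw [← Fin.sum_univ_eq_sum_range (fun n => φ n)]
  exact Fintype.sum_congr _ _ fun x => congrArg φ (ZMod.natCast_zmod_val (n := q + 1) x)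

theorem sum_range_prod_natCast_zmod {ι : Type*} [Fintype ι] (a : ι → ℕ)
    [∀ i, NeZero (a i)] (ha : Pairwise (Function.onFun Nat.Coprime a))
    (φ : ∀ i, ZMod (a i) → ℝ) :
    ∑ n ∈ range (∏ i, a i), ∏ i, φ i n = ∏ i, ∑ x, φ i x := by
  classical
  have : NeZero (∏ i, a i) := ⟨prod_ne_zero_iff.2 fun i _ => NeZero.ne (a i)⟩
  let e := ZMod.prodEquivPi a ha
  have hcast : ∀ (n : ℕ) (i : ι), (n : ZMod (a i)) = e (n : ZMod (∏ i, a i)) i := fun n i => by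
    rw [map_natCast, Pi.natCast_apply]
  calc ∑ n ∈ range (∏ i, a i), ∏ i, φ i n = ∑ x : ZMod (∏ i, a i), ∏ i, φ i (e x i) := by
        simp only [hcast]
        exact sum_range_natCast_zmod _ fun x => ∏ i, φ i (e x i)
    _ = ∑ y : ∀ i, ZMod (a i), ∏ i, φ i (y i) := e.toEquiv.sum_comp fun y => ∏ i, φ i (y i)
    _ = ∏ i, ∑ x, φ i x := by rw [prod_univ_sum, Fintype.piFinset_univ]

theorem sum_range_prod_primes_natCast_zmod {u : Finset ℕ} (hu : ∀ p ∈ u, p.Prime)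
    (φ : ∀ p : ℕ, ZMod p → ℝ) :
    ∑ n ∈ range (∏ p ∈ u, p), ∏ p ∈ u, φ p n = ∏ p ∈ u, ∑ n ∈ range p, φ p n := by
  have : ∀ p : u, NeZero (p : ℕ) := fun p => ⟨(hu p p.2).ne_zero⟩
  have hcop : Pairwise (Function.onFun Nat.Coprime ((↑) : u → ℕ)) := fun p q hpq =>
    (Nat.coprime_primes (hu p p.2) (hu q q.2)).2 (Subtype.coe_injective.ne hpq)
  simp only [← prod_coe_sort u, sum_range_prod_natCast_zmod _ hcop, sum_range_natCast_zmod]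

theorem sum_range_mul_of_periodic {q : ℕ} {f : ℕ → ℝ} (hf : Function.Periodic f q) (a : ℕ) :
    ∑ n ∈ range (a * q), f n = a * ∑ n ∈ range q, f n := by
  induction a with
  | zero => simp
  | succ a ih =>
    have hshift : ∀ n, f (a * q + n) = f n := fun n => by
      rw [add_comm, ← smul_eq_mul]; exact hf.nsmul a n
    rw [Nat.succ_mul, sum_range_add, ih, sum_congr rfl fun n _ => hshift n]
    push_cast
    ring

theorem sum_range_le_of_periodic {q : ℕ} (hq : 0 < q) {f : ℕ → ℝ} (hf : Function.Periodic f q)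
    (hle : ∀ n, f n ≤ 1) {c : ℝ} (hc : 0 ≤ c) (hmean : ∑ n ∈ range q, f n = q * c) (X : ℕ) :
    ∑ n ∈ range X, f n ≤ X * c + q := by
  have hshift : ∀ n, f (X / q * q + n) = f n := fun n => by
    rw [add_comm, ← smul_eq_mul]; exact hf.nsmul _ n
  have hrem : ∑ n ∈ range (X % q), f n ≤ q := by
    calc ∑ n ∈ range (X % q), f n ≤ ∑ n ∈ range (X % q), 1 := sum_le_sum fun n _ => hle n
      _ = ((X % q : ℕ) : ℝ) := by simp
      _ ≤ q := mod_cast (Nat.mod_lt X hq).le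
  have hdiv : ((X / q : ℕ) : ℝ) * q ≤ X := mod_cast Nat.div_mul_le_self X q
  calc ∑ n ∈ range X, f n = ((X / q : ℕ) : ℝ) * (q * c) + ∑ n ∈ range (X % q), f n := by
        conv_lhs => rw [← Nat.div_add_mod' X q]
        rw [sum_range_add, sum_range_mul_of_periodic hf, hmean, sum_congr rfl fun n _ => hshift n]
    _ ≤ X * c + q := by nlinarith

end PeriodicSums

section SelbergSieve

/-- The density `ω / (p - ω)` attached to `ω = #(Ω p)` excluded residue classes modulo `p`. -/
noncomputable def sieveDensity (Ω : ∀ p : ℕ, Finset (ZMod p)) (p : ℕ) : ℝ :=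
  #(Ω p) / (p - #(Ω p))

/-- The function on `ℤ/pℤ` of mean zero which is `-1` on the excluded classes and constant on the
others. -/
noncomputable def sieveFactor (Ω : ∀ p : ℕ, Finset (ZMod p)) (p : ℕ) (x : ZMod p) : ℝ :=
  if x ∈ Ω p then -1 else sieveDensity Ω p

/-- The subsets of `u` with product at most `R`. For a set `u` of primes they encode the squarefree
sieve moduli of level `R`. -/
def subsetsProdLE (u : Finset ℕ) (R : ℕ) : Finset (Finset ℕ) :=
  u.powerset.filter fun s => ∏ p ∈ s, p ≤ R

theorem mem_subsetsProdLE {u s : Finset ℕ} {R : ℕ} :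
    s ∈ subsetsProdLE u R ↔ s ⊆ u ∧ ∏ p ∈ s, p ≤ R := by
  rw [subsetsProdLE, mem_filter, mem_powerset]

theorem subsetsProdLE_subset_powerset (u : Finset ℕ) (R : ℕ) : subsetsProdLE u R ⊆ u.powerset :=
  filter_subset _ _

theorem prod_nonneg_of_mem_subsetsProdLE {u s : Finset ℕ} {R : ℕ} {h : ℕ → ℝ}
    (hh : ∀ p ∈ u, 0 ≤ h p) (hs : s ∈ subsetsProdLE u R) : 0 ≤ ∏ p ∈ s, h p :=
  prod_nonneg fun p hp => hh p ((mem_subsetsProdLE.1 hs).1 hp)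

theorem card_subsetsProdLE_le {u : Finset ℕ} (hu : ∀ p ∈ u, p.Prime) (R : ℕ) :
    #(subsetsProdLE u R) ≤ R := by
  have hprime : ∀ s ∈ subsetsProdLE u R, ∀ p ∈ s, p.Prime := fun s hs p hp =>
    hu p ((mem_subsetsProdLE.1 hs).1 hp)
  have hinj : Set.InjOn (fun s : Finset ℕ => ∏ p ∈ s, p) (subsetsProdLE u R) :=
    fun s hs t ht hst => by
      rw [← Nat.primeFactors_prod (hprime s hs), ← Nat.primeFactors_prod (hprime t ht)]
      exact congrArg Nat.primeFactors hst
  have hmaps : Set.MapsTo (fun s : Finset ℕ => ∏ p ∈ s, p) (subsetsProdLE u R) (Icc 1 R) :=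
    fun s hs => mem_coe.2 <| mem_Icc.2
      ⟨prod_pos fun p hp => (hprime s hs p hp).pos, (mem_subsetsProdLE.1 hs).2⟩
  simpa using card_le_card_of_injOn _ hmaps hinj

variable {Ω : ∀ p : ℕ, Finset (ZMod p)} {p : ℕ}

theorem sieveDensity_nonneg (h : 2 * #(Ω p) ≤ p) : 0 ≤ sieveDensity Ω p :=
  div_nonneg (Nat.cast_nonneg _) (sub_nonneg.2 (mod_cast by omega))

theorem sieveDensity_le_one (h : 2 * #(Ω p) ≤ p) : sieveDensity Ω p ≤ 1 := by
  have h : (2 * #(Ω p) : ℝ) ≤ p := mod_cast h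
  exact div_le_one_of_le₀ (by linarith) (by linarith [(#(Ω p)).cast_nonneg (α := ℝ)])

theorem sieveDensity_le_div {K : ℕ} (hp : 0 < p) (hΩ : #(Ω p) ≤ K) (h : 2 * K ≤ p) :
    sieveDensity Ω p ≤ 2 * K / p := by
  have hp : (0 : ℝ) < p := mod_cast hp
  have hΩ : (#(Ω p) : ℝ) ≤ K := mod_cast hΩ
  have h : (2 * K : ℝ) ≤ p := mod_cast h
  rw [sieveDensity, div_le_div_iff₀ (by linarith) hp]
  nlinarith [K.cast_nonneg (α := ℝ)]

theorem exp_card_div_le_one_add_sieveDensity (h : #(Ω p) < p) :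
    Real.exp (#(Ω p) / p) ≤ 1 + sieveDensity Ω p := by
  have h : (#(Ω p) : ℝ) < p := mod_cast h
  have hp : (0 : ℝ) < p := lt_of_le_of_lt (Nat.cast_nonneg _) h
  have hinv : 1 + sieveDensity Ω p = (1 - #(Ω p) / p : ℝ)⁻¹ := by
    rw [sieveDensity]
    field_simp [(sub_pos.2 h).ne']
    ring
  rw [hinv, ← inv_inv (Real.exp _), ← Real.exp_neg]
  exact inv_anti₀ (sub_pos.2 ((div_lt_one hp).2 h)) (Real.one_sub_le_exp_neg _)

theorem sieveFactor_eq (x : ZMod p) :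
    sieveFactor Ω p x =
      sieveDensity Ω p - (1 + sieveDensity Ω p) * if x ∈ Ω p then 1 else 0 := by
  rw [sieveFactor]
  split_ifs <;> ring

theorem abs_sieveFactor_le_one (h : 2 * #(Ω p) ≤ p) (x : ZMod p) : |sieveFactor Ω p x| ≤ 1 := by
  rw [sieveFactor]
  split_ifs
  · simp
  · rw [abs_of_nonneg (sieveDensity_nonneg h)]
    exact sieveDensity_le_one h

theorem sum_sieveFactor (h : #(Ω p) < p) : ∑ n ∈ range p, sieveFactor Ω p n = 0 := by
  have : NeZero p := ⟨by omega⟩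
  have h : (p - #(Ω p) : ℝ) ≠ 0 := (sub_pos.2 (mod_cast h)).ne'
  rw [sum_range_natCast_zmod p (sieveFactor Ω p)]
  simp only [sieveFactor_eq, sum_sub_distrib, ← mul_sum, sum_ite_mem, univ_inter, sum_const,
    card_univ, ZMod.card, nsmul_eq_mul]
  rw [sieveDensity]
  field_simp
  ring

theorem sum_sieveFactor_sq (h : #(Ω p) < p) :
    ∑ n ∈ range p, sieveFactor Ω p n * sieveFactor Ω p n = p * sieveDensity Ω p := by
  have : NeZero p := ⟨by omega⟩
  have h : (p - #(Ω p) : ℝ) ≠ 0 := (sub_pos.2 (mod_cast h)).ne'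
  have hsq : ∀ x : ZMod p, sieveFactor Ω p x * sieveFactor Ω p x =
      sieveDensity Ω p ^ 2 + (1 - sieveDensity Ω p ^ 2) * if x ∈ Ω p then 1 else 0 := fun x => by
    rw [sieveFactor]
    split_ifs <;> ring
  rw [sum_range_natCast_zmod p fun x => sieveFactor Ω p x * sieveFactor Ω p x]
  simp only [hsq, sum_add_distrib, ← mul_sum, sum_ite_mem, univ_inter, sum_const, card_univ,
    ZMod.card, nsmul_eq_mul]
  rw [sieveDensity]
  field_simp
  ring

theorem abs_prod_sieveFactor_le_one {s : Finset ℕ} (hs : ∀ p ∈ s, 2 * #(Ω p) ≤ p) (n : ℕ) :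
    |∏ p ∈ s, sieveFactor Ω p n| ≤ 1 := by
  rw [abs_prod]
  exact prod_le_one (fun _ _ => abs_nonneg _) fun p hp => abs_sieveFactor_le_one (hs p hp) n

theorem sum_range_prod_sieveFactor_mul {s t : Finset ℕ} (hprime : ∀ p ∈ s ∪ t, p.Prime)
    (hcard : ∀ p ∈ s ∪ t, #(Ω p) < p) :
    ∑ n ∈ range (∏ p ∈ s ∪ t, p), (∏ p ∈ s, sieveFactor Ω p n) * ∏ p ∈ t, sieveFactor Ω p n =
      (∏ p ∈ s ∪ t, p : ℕ) * if s = t then ∏ p ∈ s, sieveDensity Ω p else 0 := by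
  let φ : ∀ p : ℕ, ZMod p → ℝ := fun p x =>
    (if p ∈ s then sieveFactor Ω p x else 1) * if p ∈ t then sieveFactor Ω p x else 1
  have hφ : ∀ n : ℕ, (∏ p ∈ s, sieveFactor Ω p n) * ∏ p ∈ t, sieveFactor Ω p n =
      ∏ p ∈ s ∪ t, φ p n := fun n => by
    simp only [φ, prod_mul_distrib, prod_ite_mem, union_inter_cancel_left,
      union_inter_cancel_right]
  simp only [hφ, sum_range_prod_primes_natCast_zmod hprime φ]
  split_ifs with hst
  · subst hst
    rw [union_self] at hcard ⊢
    rw [Nat.cast_prod, ← prod_mul_distrib]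
    refine prod_congr rfl fun p hp => ?_
    simp only [φ, if_pos hp, sum_sieveFactor_sq (hcard p hp)]
  · obtain ⟨p, hp⟩ := symmDiff_nonempty.2 hst
    rw [mul_zero]
    have hpu : p ∈ s ∪ t := symmDiff_subset_union hp
    refine prod_eq_zero hpu ?_
    rcases mem_symmDiff.1 hp with ⟨hs, ht⟩ | ⟨ht, hs⟩ <;>
      simp only [φ, hs, ht, if_true, if_false, mul_one, one_mul, sum_sieveFactor (hcard p hpu)]

theorem periodic_prod_sieveFactor {s u : Finset ℕ} (hs : s ⊆ u) :
    Function.Periodic (fun n : ℕ => ∏ p ∈ s, sieveFactor Ω p n) (∏ p ∈ u, p) := fun n =>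
  prod_congr rfl fun p hp => by
    rw [Nat.cast_add, (ZMod.natCast_eq_zero_iff _ _).2 (dvd_prod_of_mem _ (hs hp)), add_zero]

theorem prod_union_le_mul {u s t : Finset ℕ} (hu : ∀ p ∈ u, p.Prime) {R : ℕ}
    (hs : s ∈ subsetsProdLE u R) (ht : t ∈ subsetsProdLE u R) :
    ∏ p ∈ s ∪ t, p ≤ R * R := by
  rw [mem_subsetsProdLE] at hs ht
  calc ∏ p ∈ s ∪ t, p ≤ (∏ p ∈ s ∪ t, p) * ∏ p ∈ s ∩ t, p :=
        Nat.le_mul_of_pos_right _ <| prod_pos fun p hp =>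
          (hu p (hs.1 (mem_of_mem_inter_left hp))).pos
    _ = (∏ p ∈ s, p) * ∏ p ∈ t, p := prod_union_inter
    _ ≤ R * R := Nat.mul_le_mul hs.2 ht.2

theorem sum_prod_sieveFactor_mul_le {u s t : Finset ℕ} (hprime : ∀ p ∈ u, p.Prime)
    (hcard : ∀ p ∈ u, 2 * #(Ω p) ≤ p) {R : ℕ} (hs : s ∈ subsetsProdLE u R)
    (ht : t ∈ subsetsProdLE u R) (X : ℕ) :
    ∑ n ∈ range X, (∏ p ∈ s, sieveFactor Ω p n) * ∏ p ∈ t, sieveFactor Ω p n ≤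
      X * (if s = t then ∏ p ∈ s, sieveDensity Ω p else 0) + (R : ℝ) ^ 2 := by
  have hsu := (mem_subsetsProdLE.1 hs).1
  have htu := (mem_subsetsProdLE.1 ht).1
  have hst : s ∪ t ⊆ u := union_subset hsu htu
  have hperiodic : Function.Periodic (fun n : ℕ =>
      (∏ p ∈ s, sieveFactor Ω p n) * ∏ p ∈ t, sieveFactor Ω p n) (∏ p ∈ s ∪ t, p) :=
    (periodic_prod_sieveFactor subset_union_left).mul
      (periodic_prod_sieveFactor subset_union_right)
  have hbound : ∀ n : ℕ,
      (∏ p ∈ s, sieveFactor Ω p n) * ∏ p ∈ t, sieveFactor Ω p n ≤ 1 := fun n => by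
    refine (le_abs_self _).trans ?_
    rw [abs_mul]
    exact mul_le_one₀ (abs_prod_sieveFactor_le_one (fun p hp => hcard p (hsu hp)) n)
      (abs_nonneg _) (abs_prod_sieveFactor_le_one (fun p hp => hcard p (htu hp)) n)
  have hmean : 0 ≤ if s = t then ∏ p ∈ s, sieveDensity Ω p else 0 := by
    split_ifs
    · exact prod_nonneg fun p hp => sieveDensity_nonneg (hcard p (hsu hp))
    · exact le_rfl
  have hcorr := sum_range_prod_sieveFactor_mul (Ω := Ω) (fun p hp => hprime p (hst hp))
    fun p hp => by have := hcard p (hst hp); have := (hprime p (hst hp)).pos; omega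
  refine (sum_range_le_of_periodic (prod_pos fun p hp => (hprime p (hst hp)).pos) hperiodic hbound
    hmean hcorr X).trans (add_le_add_right ?_ _)
  rw [sq]
  exact_mod_cast prod_union_le_mul hprime hs ht

-- Selberg's sieve in the dual (large sieve) form: on the sifted set the sum of all
-- `∏ p ∈ s, sieveFactor Ω p n` equals `G`, and its second moment is nearly diagonal.
theorem card_mul_sq_le_of_sifted {u : Finset ℕ} (hprime : ∀ p ∈ u, p.Prime)
    (hcard : ∀ p ∈ u, 2 * #(Ω p) ≤ p) {X : ℕ} {S : Finset ℕ} (hS : S ⊆ range X)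
    (hsift : ∀ n ∈ S, ∀ p ∈ u, (n : ZMod p) ∉ Ω p) (R : ℕ) :
    #S * (∑ s ∈ subsetsProdLE u R, ∏ p ∈ s, sieveDensity Ω p) ^ 2 ≤
      X * (∑ s ∈ subsetsProdLE u R, ∏ p ∈ s, sieveDensity Ω p) + (R : ℝ) ^ 4 := by
  set D := subsetsProdLE u R
  set ψ : Finset ℕ → ℕ → ℝ := fun s n => ∏ p ∈ s, sieveFactor Ω p n
  have hψ : ∀ n ∈ S, ∑ s ∈ D, ψ s n = ∑ s ∈ D, ∏ p ∈ s, sieveDensity Ω p := fun n hn =>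
    sum_congr rfl fun s hs => prod_congr rfl fun p hp =>
      if_neg (hsift n hn p ((mem_subsetsProdLE.1 hs).1 hp))
  calc #S * (∑ s ∈ D, ∏ p ∈ s, sieveDensity Ω p) ^ 2
      = ∑ n ∈ S, (∑ s ∈ D, ∏ p ∈ s, sieveDensity Ω p) ^ 2 := by rw [sum_const, nsmul_eq_mul]
    _ = ∑ n ∈ S, (∑ s ∈ D, ψ s n) ^ 2 := sum_congr rfl fun n hn => by rw [hψ n hn]
    _ ≤ ∑ n ∈ range X, (∑ s ∈ D, ψ s n) ^ 2 :=
        sum_le_sum_of_subset_of_nonneg hS fun _ _ _ => sq_nonneg _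
    _ = ∑ s ∈ D, ∑ t ∈ D, ∑ n ∈ range X, ψ s n * ψ t n := by
        simp only [sq, sum_mul_sum]
        rw [sum_comm]
        exact sum_congr rfl fun s _ => sum_comm
    _ ≤ ∑ s ∈ D, ∑ t ∈ D,
          (X * (if s = t then ∏ p ∈ s, sieveDensity Ω p else 0) + (R : ℝ) ^ 2) :=
        sum_le_sum fun s hs => sum_le_sum fun t ht =>
          sum_prod_sieveFactor_mul_le hprime hcard hs ht X
    _ = X * (∑ s ∈ D, ∏ p ∈ s, sieveDensity Ω p) + (#D : ℝ) ^ 2 * (R : ℝ) ^ 2 := by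
        simp only [sum_add_distrib, ← mul_sum, sum_ite_eq, sum_const, nsmul_eq_mul]
        rw [sum_congr rfl fun s hs => if_pos hs]
        ring
    _ ≤ X * (∑ s ∈ D, ∏ p ∈ s, sieveDensity Ω p) + (R : ℝ) ^ 2 * (R : ℝ) ^ 2 := by
        have : (#D : ℝ) ≤ R := mod_cast card_subsetsProdLE_le hprime R
        gcongr
    _ = _ := by ring

end SelbergSieve

section Rankin

theorem sum_prod_sdiff_subsetsProdLE_le {u : Finset ℕ} {h : ℕ → ℝ} (hh : ∀ p ∈ u, 0 ≤ h p)
    {R : ℕ} (hR : 0 < R) {ε : ℝ} (hε : 0 ≤ ε) :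
    ∑ s ∈ u.powerset \ subsetsProdLE u R, ∏ p ∈ s, h p ≤
      (R : ℝ) ^ (-ε) * ∏ p ∈ u, (1 + h p * (p : ℝ) ^ ε) := by
  have hterm : ∀ s ∈ u.powerset, 0 ≤ ∏ p ∈ s, h p := fun s hs =>
    prod_nonneg fun p hp => hh p (mem_powerset.1 hs hp)
  have hrankin : ∀ s ∈ u.powerset \ subsetsProdLE u R,
      ∏ p ∈ s, h p ≤ (R : ℝ) ^ (-ε) * ∏ p ∈ s, h p * (p : ℝ) ^ ε := fun s hs => by
    obtain ⟨hsu, hsR⟩ := mem_sdiff.1 hs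
    have hlt : R < ∏ p ∈ s, p := by
      by_contra! hle
      exact hsR (mem_subsetsProdLE.2 ⟨mem_powerset.1 hsu, hle⟩)
    have hone : 1 ≤ (R : ℝ) ^ (-ε) * ((∏ p ∈ s, p : ℕ) : ℝ) ^ ε := by
      rw [Real.rpow_neg R.cast_nonneg, inv_mul_eq_div,
        one_le_div (Real.rpow_pos_of_pos (mod_cast hR) ε)]
      exact Real.rpow_le_rpow R.cast_nonneg (mod_cast hlt.le) hε
    rw [prod_mul_distrib, Real.finsetProd_rpow _ _ fun p _ => p.cast_nonneg, ← Nat.cast_prod,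
      mul_left_comm]
    exact le_mul_of_one_le_right (hterm s hsu) hone
  rw [prod_one_add, mul_sum]
  refine (sum_le_sum hrankin).trans (sum_le_sum_of_subset_of_nonneg sdiff_subset fun s hs _ => ?_)
  rw [prod_mul_distrib]
  exact mul_nonneg (by positivity) (mul_nonneg (hterm s hs) (by positivity))

theorem exp_le_one_add_two_mul {x : ℝ} (h₀ : 0 ≤ x) (h₁ : x ≤ 1) : Real.exp x ≤ 1 + 2 * x := by
  have := (abs_le.1 (Real.abs_exp_sub_one_sub_id_le (abs_le.2 ⟨by linarith, h₁⟩))).2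
  nlinarith

theorem one_add_mul_rpow_le {x h κ ε : ℝ} (hx : 1 ≤ x) (hh : 0 ≤ h) (hκ : h ≤ κ / x)
    (hε : 0 ≤ ε) (hεx : Real.log x * ε ≤ 1) :
    1 + h * x ^ ε ≤ Real.exp (2 * κ * ε * (Real.log x / x)) * (1 + h) := by
  have hlog : 0 ≤ Real.log x * ε := mul_nonneg (Real.log_nonneg hx) hε
  have hrpow : x ^ ε ≤ 1 + 2 * (Real.log x * ε) := by
    rw [Real.rpow_def_of_pos (by linarith)]
    exact exp_le_one_add_two_mul hlog hεx
  have hlinear : h * (2 * (Real.log x * ε)) ≤ 2 * κ * ε * (Real.log x / x) := by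
    calc _ ≤ κ / x * (2 * (Real.log x * ε)) := by gcongr
      _ = _ := by ring
  have hnonneg : 0 ≤ 2 * κ * ε * (Real.log x / x) := le_trans (by positivity) hlinear
  calc 1 + h * x ^ ε ≤ 1 + h * (1 + 2 * (Real.log x * ε)) := by gcongr
    _ ≤ (2 * κ * ε * (Real.log x / x) + 1) * (1 + h) := by nlinarith [mul_nonneg hnonneg hh]
    _ ≤ _ := by gcongr; exact Real.add_one_le_exp _

theorem prod_one_add_mul_rpow_le {W : ℕ} (hW : 2 ≤ W) {u : Finset ℕ} (hu : u ⊆ W.primesLE)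
    {h : ℕ → ℝ} {κ : ℝ} (hκ₀ : 0 ≤ κ) (hh : ∀ p ∈ u, 0 ≤ h p) (hκ : ∀ p ∈ u, h p ≤ κ / p) :
    ∏ p ∈ u, (1 + h p * (p : ℝ) ^ (1 / Real.log W)) ≤
      Real.exp (6 * κ) * ∏ p ∈ u, (1 + h p) := by
  have hW : (2 : ℝ) ≤ W := mod_cast hW
  have hlog : 0 < Real.log W := Real.log_pos (by linarith)
  set ε := 1 / Real.log W with hε
  have hfactor : ∀ p ∈ u, 1 + h p * (p : ℝ) ^ ε ≤
      Real.exp (2 * κ * ε * (Real.log p / p)) * (1 + h p) := fun p hp => by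
    have hp₁ : (1 : ℝ) ≤ p := mod_cast (Nat.one_lt_of_mem_primesLE (hu hp)).le
    refine one_add_mul_rpow_le hp₁ (hh p hp) (hκ p hp) (by positivity) ?_
    rw [hε, mul_one_div, div_le_one hlog]
    exact Real.log_le_log (by linarith) (mod_cast Nat.le_of_mem_primesLE (hu hp))
  have hmertens : ∑ p ∈ u, Real.log p / p ≤ 3 * Real.log W := by
    calc ∑ p ∈ u, Real.log p / p ≤ ∑ p ∈ W.primesLE, Real.log p / p :=
          sum_le_sum_of_subset_of_nonneg hu fun p _ _ =>
            div_nonneg (Real.log_natCast_nonneg p) p.cast_nonneg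
      _ ≤ Real.log W + Real.log (2 ^ 2) := by
          rw [show (2 : ℝ) ^ 2 = 4 by norm_num]; exact sum_primesLE_log_div_le W
      _ ≤ 3 * Real.log W := by
          rw [Real.log_pow]
          push_cast
          linarith [Real.log_le_log two_pos hW]
  have hprod : 0 ≤ ∏ p ∈ u, (1 + h p) := prod_nonneg fun p hp => by linarith [hh p hp]
  calc ∏ p ∈ u, (1 + h p * (p : ℝ) ^ ε)
      ≤ ∏ p ∈ u, Real.exp (2 * κ * ε * (Real.log p / p)) * (1 + h p) :=
        prod_le_prod (fun p hp => by have := hh p hp; positivity) hfactor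
    _ = Real.exp (2 * κ * ε * ∑ p ∈ u, Real.log p / p) * ∏ p ∈ u, (1 + h p) := by
        rw [prod_mul_distrib, mul_sum, Real.exp_sum]
    _ ≤ Real.exp (2 * κ * ε * (3 * Real.log W)) * ∏ p ∈ u, (1 + h p) := by gcongr
    _ = _ := by
        rw [show 2 * κ * ε * (3 * Real.log W) = 6 * κ by rw [hε]; field_simp; ring]

theorem prod_one_add_div_two_le_sum_subsetsProdLE {W : ℕ} (hW : 2 ≤ W) {u : Finset ℕ}
    (hu : u ⊆ W.primesLE) {h : ℕ → ℝ} {κ : ℕ} (hh : ∀ p ∈ u, 0 ≤ h p)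
    (hκ : ∀ p ∈ u, h p ≤ κ / p) :
    (∏ p ∈ u, (1 + h p)) / 2 ≤ ∑ s ∈ subsetsProdLE u (W ^ (6 * κ + 1)), ∏ p ∈ s, h p := by
  have hlog : 0 < Real.log W := Real.log_pos (mod_cast hW)
  have hR : ((W ^ (6 * κ + 1) : ℕ) : ℝ) ^ (-(1 / Real.log W)) = Real.exp (-(6 * κ + 1)) := by
    rw [Real.rpow_def_of_pos (by positivity), Nat.cast_pow, Real.log_pow]
    push_cast
    field_simp
  have htail := sum_prod_sdiff_subsetsProdLE_le hh (R := W ^ (6 * κ + 1)) (by positivity)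
    (one_div_nonneg.2 hlog.le)
  have hsplit := sum_sdiff (f := fun s => ∏ p ∈ s, h p)
    (subsetsProdLE_subset_powerset u (W ^ (6 * κ + 1)))
  rw [← prod_one_add] at hsplit
  have hprod : 0 ≤ ∏ p ∈ u, (1 + h p) := prod_nonneg fun p hp => by linarith [hh p hp]
  have hhalf : Real.exp (-1) ≤ 1 / 2 := by
    rw [Real.exp_neg, one_div]
    exact inv_anti₀ two_pos (by linarith [Real.add_one_le_exp 1])
  have htail_half : Real.exp (-(6 * κ + 1)) * ∏ p ∈ u, (1 + h p * (p : ℝ) ^ (1 / Real.log W)) ≤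
      1 / 2 * ∏ p ∈ u, (1 + h p) := by
    calc _ ≤ Real.exp (-(6 * κ + 1)) * (Real.exp (6 * κ) * ∏ p ∈ u, (1 + h p)) := by
          gcongr; exact prod_one_add_mul_rpow_le hW hu κ.cast_nonneg hh hκ
      _ = Real.exp (-1) * ∏ p ∈ u, (1 + h p) := by
          rw [← mul_assoc, ← Real.exp_add]; congr 2; ring
      _ ≤ _ := by gcongr
  rw [hR] at htail
  linarith

end Rankin

section UpperBoundSieve

variable {Ω : ∀ p : ℕ, Finset (ZMod p)}

theorem exp_sum_card_div_le_prod_one_add_sieveDensity {u : Finset ℕ}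
    (hcard : ∀ p ∈ u, #(Ω p) < p) :
    Real.exp (∑ p ∈ u, (#(Ω p) / p : ℝ)) ≤ ∏ p ∈ u, (1 + sieveDensity Ω p) := by
  rw [Real.exp_sum]
  exact prod_le_prod (fun _ _ => (Real.exp_pos _).le)
    fun p hp => exp_card_div_le_one_add_sieveDensity (hcard p hp)

theorem card_le_of_sifted {K W : ℕ} (hW : 2 ≤ W) {u : Finset ℕ} (hu : u ⊆ W.primesLE)
    (hK : ∀ p ∈ u, 2 * K ≤ p) (hΩ : ∀ p ∈ u, #(Ω p) ≤ K) {X : ℕ} {S : Finset ℕ}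
    (hS : S ⊆ range X) (hsift : ∀ n ∈ S, ∀ p ∈ u, (n : ZMod p) ∉ Ω p) :
    (#S : ℝ) ≤ 2 * X * Real.exp (-∑ p ∈ u, (#(Ω p) / p : ℝ)) + (W : ℝ) ^ (48 * K + 4) := by
  have hcard : ∀ p ∈ u, 2 * #(Ω p) ≤ p := fun p hp => by have := hK p hp; have := hΩ p hp; omega
  have hlt : ∀ p ∈ u, #(Ω p) < p := fun p hp => by
    have := hcard p hp; have := (Nat.prime_of_mem_primesLE (hu hp)).pos; omega
  have hnonneg : ∀ p ∈ u, 0 ≤ sieveDensity Ω p := fun p hp => sieveDensity_nonneg (hcard p hp)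
  set R := W ^ (6 * (2 * K) + 1) with hR
  set G := ∑ s ∈ subsetsProdLE u R, ∏ p ∈ s, sieveDensity Ω p
  have hselberg : #S * G ^ 2 ≤ X * G + (R : ℝ) ^ 4 :=
    card_mul_sq_le_of_sifted (fun p hp => Nat.prime_of_mem_primesLE (hu hp)) hcard hS hsift R
  have hrankin : Real.exp (∑ p ∈ u, (#(Ω p) / p : ℝ)) / 2 ≤ G := by
    refine le_trans ?_ (prod_one_add_div_two_le_sum_subsetsProdLE (κ := 2 * K) hW hu hnonneg ?_)
    · gcongr; exact exp_sum_card_div_le_prod_one_add_sieveDensity hlt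
    · intro p hp
      push_cast
      exact sieveDensity_le_div (Nat.prime_of_mem_primesLE (hu hp)).pos (hΩ p hp) (hK p hp)
  have hone : 1 ≤ G := by
    have hempty : ∅ ∈ subsetsProdLE u R :=
      mem_subsetsProdLE.2 ⟨empty_subset u, Nat.one_le_pow _ _ (by omega)⟩
    simpa using single_le_sum (f := fun s => ∏ p ∈ s, sieveDensity Ω p)
      (fun s hs => prod_nonneg_of_mem_subsetsProdLE hnonneg hs) hempty
  have hdiv : (#S : ℝ) ≤ X / G + (R : ℝ) ^ 4 := by
    refine le_of_mul_le_mul_right (hselberg.trans ?_) (by positivity : 0 < G ^ 2)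
    rw [add_mul, show (X : ℝ) / G * G ^ 2 = X * G by field_simp]
    gcongr
    exact le_mul_of_one_le_right (by positivity) (one_le_pow₀ hone)
  calc (#S : ℝ) ≤ X / G + (R : ℝ) ^ 4 := hdiv
    _ ≤ X / (Real.exp (∑ p ∈ u, (#(Ω p) / p : ℝ)) / 2) + (R : ℝ) ^ 4 := by gcongr
    _ = _ := by rw [Real.exp_neg, hR]; push_cast; field_simp; ring

end UpperBoundSieve

/-! ### Sifting by linear forms -/

section LinearForms

theorem sum_one_div_primeFactors_le {Z : ℕ} (hZ : 2 ≤ Z) (Q : ℕ) :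
    ∑ p ∈ Q.primeFactors with Z < p, (1 : ℝ) / p ≤ Real.log Q / (Z + 1) := by
  rcases Q.eq_zero_or_pos with rfl | hQ
  · simp
  have hlog : ∀ p : ℕ, Z < p → 1 ≤ Real.log p := fun p hp => by
    have hp : (3 : ℝ) ≤ p := mod_cast (by omega : 3 ≤ p)
    exact (Real.le_log_iff_exp_le (by linarith)).2 (by linarith [Real.exp_one_lt_d9])
  calc ∑ p ∈ Q.primeFactors with Z < p, (1 : ℝ) / p
      ≤ ∑ p ∈ Q.primeFactors with Z < p, Real.log p / (Z + 1) := sum_le_sum fun p hp => by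
        have hZp := (mem_filter.1 hp).2
        gcongr
        · exact hlog p hZp
        · exact_mod_cast hZp
    _ ≤ ∑ p ∈ Q.primeFactors, Real.log p / (Z + 1) :=
        sum_le_sum_of_subset_of_nonneg (filter_subset _ _) fun p _ _ =>
          div_nonneg (Real.log_natCast_nonneg p) (by positivity)
    _ = Real.log (∏ p ∈ Q.primeFactors, p : ℕ) / (Z + 1) := by
        rw [← sum_div, Nat.cast_prod, Real.log_prod fun p hp =>
          mod_cast (Nat.prime_of_mem_primeFactors hp).ne_zero]
    _ ≤ Real.log Q / (Z + 1) := by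
        gcongr
        · exact_mod_cast prod_pos fun p hp => (Nat.prime_of_mem_primeFactors hp).pos
        · exact Nat.le_of_dvd hQ (Nat.prod_primeFactors_dvd Q)

theorem sum_union_le_add {α : Type*} [DecidableEq α] {f : α → ℝ} (hf : ∀ x, 0 ≤ f x)
    (s t : Finset α) : ∑ x ∈ s ∪ t, f x ≤ ∑ x ∈ s, f x + ∑ x ∈ t, f x := by
  rw [← sum_union_inter]
  exact le_add_of_nonneg_right (sum_nonneg fun x _ => hf x)

theorem log_log_succ_sub_le_sum_primesLE_not_dvd {Z W Q : ℕ} (hZ : 3 ≤ Z) (hW : 1 ≤ W)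
    (hQ : Q ≠ 0) :
    Real.log (Real.log (W + 1 : ℕ)) - Real.log (Real.log Z) - 6 - Real.log Q / (Z + 1) ≤
      ∑ p ∈ W.primesLE with Z < p ∧ ¬ p ∣ Q, (1 : ℝ) / p := by
  have hnonneg : ∀ p : ℕ, 0 ≤ (1 : ℝ) / p := fun p => by positivity
  have hcover : W.primesLE ⊆ {p ∈ W.primesLE | Z < p ∧ ¬ p ∣ Q} ∪
      (Z.primesLE ∪ {p ∈ Q.primeFactors | Z < p}) := fun p hp => by
    simp only [mem_union, mem_filter, Nat.mem_primesLE, Nat.mem_primeFactors] at hp ⊢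
    have := le_or_gt p Z
    tauto
  have hunion := (sum_le_sum_of_subset_of_nonneg hcover fun p _ _ => hnonneg p).trans
    ((sum_union_le_add hnonneg _ _).trans (add_le_add_right (sum_union_le_add hnonneg _ _) _))
  linarith [log_log_succ_sub_two_le_sum_primesLE hW, sum_primesLE_one_div_le hZ,
    sum_one_div_primeFactors_le (by omega : 2 ≤ Z) Q]

variable {ι : Type*} [Fintype ι] [DecidableEq ι] {a b : ι → ℤ}

/-- The discriminant of the polynomial `∏ i, (a i * X + b i)`. -/
def disc (a b : ι → ℤ) : ℤ :=
  (∏ i, a i) * ∏ i, ∏ j ∈ univ.filter (fun j => j ≠ i), (a i * b j - b i * a j)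

/-- The roots of `∏ i, (a i * X + b i)` modulo a prime `p` that divides no `a i`. -/
def rootsMod (a b : ι → ℤ) (p : ℕ) : Finset (ZMod p) :=
  univ.image fun i => -(b i : ZMod p) * (a i : ZMod p)⁻¹

theorem coeff_dvd_disc (a b : ι → ℤ) (i : ι) : a i ∣ disc a b :=
  (dvd_prod_of_mem a (mem_univ i)).mul_right _

theorem det_dvd_disc (a b : ι → ℤ) {i j : ι} (hij : i ≠ j) :
    a i * b j - b i * a j ∣ disc a b :=
  ((dvd_prod_of_mem _ (mem_filter.2 ⟨mem_univ j, hij.symm⟩)).trans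
    (dvd_prod_of_mem (fun i => ∏ j ∈ univ.filter (fun j => j ≠ i), (a i * b j - b i * a j))
      (mem_univ i))).mul_left _

theorem coeff_ne_zero_of_not_dvd_disc {p : ℕ} (hp : ¬ (p : ℤ) ∣ disc a b) (i : ι) :
    (a i : ZMod p) ≠ 0 := fun h =>
  hp (((ZMod.intCast_zmod_eq_zero_iff_dvd _ _).1 h).trans (coeff_dvd_disc a b i))

theorem card_rootsMod {p : ℕ} (hprime : p.Prime) (hp : ¬ (p : ℤ) ∣ disc a b) :
    #(rootsMod a b p) = Fintype.card ι := by
  have := Fact.mk hprime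
  refine card_image_of_injective _ fun i j hij => by_contra fun hne => hp ?_
  have hi := coeff_ne_zero_of_not_dvd_disc hp i
  have hj := coeff_ne_zero_of_not_dvd_disc hp j
  refine ((ZMod.intCast_zmod_eq_zero_iff_dvd _ _).1 ?_).trans (det_dvd_disc a b hne)
  push_cast
  field_simp at hij
  linear_combination hij

theorem exists_dvd_of_mem_rootsMod {p : ℕ} (hprime : p.Prime) (hp : ¬ (p : ℤ) ∣ disc a b) {n : ℕ}
    (hn : (n : ZMod p) ∈ rootsMod a b p) : ∃ i, (p : ℤ) ∣ a i * n + b i := by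
  have := Fact.mk hprime
  obtain ⟨i, -, hi⟩ := mem_image.1 hn
  refine ⟨i, (ZMod.intCast_zmod_eq_zero_iff_dvd _ _).1 ?_⟩
  have := coeff_ne_zero_of_not_dvd_disc hp i
  push_cast
  rw [← hi]
  field_simp
  ring

theorem card_le_of_forall_not_dvd {Z W : ℕ} (hZ : 3 ≤ Z) (hZι : 2 * Fintype.card ι ≤ Z)
    (hW : 2 ≤ W) (hdisc : disc a b ≠ 0) {κ : ℝ} (hκ : Real.log |(disc a b : ℝ)| ≤ κ * (Z + 1))
    {X : ℕ} {S : Finset ℕ} (hS : S ⊆ range X)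
    (hsift : ∀ n ∈ S, ∀ i, ∀ p : ℕ, p.Prime → Z < p → p ≤ W → ¬ (p : ℤ) ∣ a i * n + b i) :
    (#S : ℝ) ≤ 2 * Real.exp (Fintype.card ι * (6 + κ)) * X *
      (Real.log Z / Real.log (W + 1 : ℕ)) ^ Fintype.card ι +
        (W : ℝ) ^ (48 * Fintype.card ι + 4) := by
  set K := Fintype.card ι
  set u := {p ∈ W.primesLE | Z < p ∧ ¬ p ∣ (disc a b).natAbs}
  have hprime : ∀ p ∈ u, p.Prime := fun p hp => Nat.prime_of_mem_primesLE (mem_filter.1 hp).1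
  have hndvd : ∀ p ∈ u, ¬ (p : ℤ) ∣ disc a b := fun p hp h =>
    (mem_filter.1 hp).2.2 (Int.natCast_dvd.1 h)
  have hcard : ∀ p ∈ u, #(rootsMod a b p) = K := fun p hp =>
    card_rootsMod (hprime p hp) (hndvd p hp)
  have hsieve := card_le_of_sifted (K := K) hW (filter_subset _ _)
    (fun p hp => hZι.trans (mem_filter.1 hp).2.1.le) (fun p hp => (hcard p hp).le) hS
    fun n hn p hp hmem => by
      obtain ⟨i, hi⟩ := exists_dvd_of_mem_rootsMod (hprime p hp) (hndvd p hp) hmem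
      exact hsift n hn i p (hprime p hp) (mem_filter.1 hp).2.1
        (Nat.le_of_mem_primesLE (mem_filter.1 hp).1) hi
  have hmertens := log_log_succ_sub_le_sum_primesLE_not_dvd hZ (by omega : 1 ≤ W)
    (Int.natAbs_ne_zero.2 hdisc)
  have hlogZ : 0 < Real.log Z := Real.log_pos (mod_cast (by omega : 1 < Z))
  have hlogW : 0 < Real.log (W + 1 : ℕ) := Real.log_pos (mod_cast (by omega : 1 < W + 1))
  have hbad : Real.log ((disc a b).natAbs : ℝ) / (Z + 1) ≤ κ := by
    rw [div_le_iff₀ (by positivity), Nat.cast_natAbs, Int.cast_abs]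
    exact hκ
  have hexponent : -∑ p ∈ u, (#(rootsMod a b p) / p : ℝ) ≤
      K * (6 + κ) + K * Real.log (Real.log Z / Real.log (W + 1 : ℕ)) := by
    rw [sum_congr rfl fun p hp => by rw [hcard p hp, ← mul_one_div], ← mul_sum,
      Real.log_div hlogZ.ne' hlogW.ne']
    nlinarith [K.cast_nonneg (α := ℝ)]
  refine hsieve.trans (add_le_add_left ?_ _)
  calc 2 * X * Real.exp (-∑ p ∈ u, (#(rootsMod a b p) / p : ℝ))
      ≤ 2 * X * Real.exp (K * (6 + κ) + K * Real.log (Real.log Z / Real.log (W + 1 : ℕ))) := by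
        gcongr
    _ = _ := by
        rw [Real.exp_add, Real.exp_nat_mul (Real.log _), Real.exp_log (by positivity)]
        ring

end LinearForms

section Translates

variable {ι : Type*} {a b : ι → ℤ}

/-- The leading coefficients of the linear forms `a i * (r + (n - x) * M) + b i` in `n`,
indexed by `i` and `x ∈ T`. -/
def translateCoeff (a : ι → ℤ) (M : ℤ) (T : Finset ℤ) (i : ι × T) : ℤ :=
  a i.1 * M

/-- The constant coefficients of the linear forms `a i * (r + (n - x) * M) + b i` in `n`,
indexed by `i` and `x ∈ T`. -/
def translateConst (a b : ι → ℤ) (M r : ℤ) (T : Finset ℤ) (i : ι × T) : ℤ :=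
  a i.1 * (r - i.2 * M) + b i.1

theorem translate_det (a b : ι → ℤ) (M r : ℤ) {T : Finset ℤ} (i j : ι × T) :
    translateCoeff a M T i * translateConst a b M r T j -
        translateConst a b M r T i * translateCoeff a M T j =
      M * (a i.1 * b j.1 - b i.1 * a j.1 + a i.1 * a j.1 * (M * (i.2 - j.2))) := by
  simp only [translateCoeff, translateConst]
  ring

theorem abs_det_le {H : ℤ} (ha : ∀ i, |a i| ≤ H) (hb : ∀ i, |b i| ≤ H) (i j : ι) :
    |a i * b j - b i * a j| ≤ 2 * H ^ 2 := by
  have hH : 0 ≤ H := (abs_nonneg _).trans (ha i)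
  calc |a i * b j - b i * a j| ≤ |a i| * |b j| + |b i| * |a j| := by
        simpa only [abs_mul] using abs_sub (a i * b j) (b i * a j)
    _ ≤ H * H + H * H := by gcongr <;> first | exact ha _ | exact hb _
    _ = 2 * H ^ 2 := by ring

theorem prod_abs_le_pow {s : Finset ι} {f : ι → ℤ} {Y : ℤ} (h : ∀ i ∈ s, |f i| ≤ Y) :
    ∏ i ∈ s, |f i| ≤ Y ^ #s := by
  simpa only [prod_const] using prod_le_prod (fun i _ => abs_nonneg (f i)) h

variable [Fintype ι] [DecidableEq ι]

theorem disc_ne_zero_iff :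
    disc a b ≠ 0 ↔ (∀ i, a i ≠ 0) ∧ ∀ i j, i ≠ j → a i * b j - b i * a j ≠ 0 := by
  simp only [disc, mul_ne_zero_iff, prod_ne_zero_iff, mem_univ, mem_filter, true_and, true_imp_iff]
  exact and_congr_right fun _ => forall₂_congr fun i j => by rw [ne_comm]

theorem abs_disc_le {Y : ℤ} (hY : 1 ≤ Y) (ha : ∀ i, |a i| ≤ Y)
    (hdet : ∀ i j, i ≠ j → |a i * b j - b i * a j| ≤ Y) :
    |disc a b| ≤ Y ^ (Fintype.card ι + Fintype.card ι * Fintype.card ι) := by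
  rw [disc, abs_mul, abs_prod, abs_prod, pow_add, pow_mul]
  refine mul_le_mul (prod_abs_le_pow fun i _ => ha i) (prod_abs_le_pow fun i _ => ?_)
    (prod_nonneg fun i _ => abs_nonneg _) (by positivity)
  rw [abs_prod]
  exact (prod_abs_le_pow fun j hj => hdet i j (mem_filter.1 hj).2.symm).trans
    (pow_le_pow_right₀ hY (card_le_univ _))

theorem disc_translate_ne_zero (hdisc : disc a b ≠ 0) {H : ℤ} (ha : ∀ i, |a i| ≤ H)
    (hb : ∀ i, |b i| ≤ H) {M : ℤ} (hM : 2 * H ^ 2 < M) (r : ℤ) (T : Finset ℤ) :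
    disc (translateCoeff a M T) (translateConst a b M r T) ≠ 0 := by
  obtain ⟨ha₀, hdet⟩ := disc_ne_zero_iff.1 hdisc
  have hM₀ : 0 < M := (by positivity : 0 ≤ 2 * H ^ 2).trans_lt hM
  refine disc_ne_zero_iff.2 ⟨fun i => mul_ne_zero (ha₀ _) hM₀.ne', fun i j hij => ?_⟩
  rw [translate_det]
  refine mul_ne_zero hM₀.ne' ?_
  by_cases hx : i.2 = j.2
  · have : i.1 ≠ j.1 := fun h => hij (Prod.ext h hx)
    simpa [hx] using hdet _ _ this
  · have hdiff : (i.2 - j.2 : ℤ) ≠ 0 := sub_ne_zero.2 fun h => hx (Subtype.ext h)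
    intro hzero
    have hcoeff : 1 ≤ |a i.1 * a j.1 * (i.2 - j.2)| :=
      Int.one_le_abs (mul_ne_zero (mul_ne_zero (ha₀ _) (ha₀ _)) hdiff)
    have habs : |a i.1 * b j.1 - b i.1 * a j.1| = M * |a i.1 * a j.1 * (i.2 - j.2)| := by
      rw [← abs_neg, show -(a i.1 * b j.1 - b i.1 * a j.1) = M * (a i.1 * a j.1 * (i.2 - j.2)) by
        linear_combination -hzero, abs_mul, abs_of_pos hM₀]
    nlinarith [abs_det_le ha hb i.1 j.1]

theorem abs_disc_translate_le {H : ℤ} (hH : 1 ≤ H) (ha : ∀ i, |a i| ≤ H) (hb : ∀ i, |b i| ≤ H)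
    {M : ℤ} (hM : 1 ≤ M) (r : ℤ) {T : Finset ℤ} {D : ℤ} (hD : 0 ≤ D)
    (hT : ∀ x ∈ T, ∀ y ∈ T, |x - y| ≤ D) :
    |disc (translateCoeff a M T) (translateConst a b M r T)| ≤
      (H ^ 2 * M * (M * D + 2)) ^
        (Fintype.card (ι × T) + Fintype.card (ι × T) * Fintype.card (ι × T)) := by
  have hMD : 0 ≤ M * D := by positivity
  have hHM : 1 ≤ H * M := one_le_mul_of_one_le_of_one_le hH hM
  have hle : H * M ≤ H ^ 2 * M * (M * D + 2) := by
    calc H * M ≤ H * (H * M) := le_mul_of_one_le_left (by positivity) hH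
      _ ≤ H * (H * M) * (M * D + 2) := le_mul_of_one_le_right (by positivity) (by linarith)
      _ = _ := by ring
  refine abs_disc_le (hHM.trans hle) (fun i => ?_) fun i j _ => ?_
  · rw [translateCoeff, abs_mul, abs_of_pos (by linarith : 0 < M)]
    exact (mul_le_mul_of_nonneg_right (ha _) (by linarith)).trans hle
  · rw [translate_det, abs_mul, abs_of_pos (by linarith : 0 < M)]
    calc M * |a i.1 * b j.1 - b i.1 * a j.1 + a i.1 * a j.1 * (M * (i.2 - j.2))|
        ≤ M * (|a i.1 * b j.1 - b i.1 * a j.1| + |a i.1| * |a j.1| * (M * |(i.2 - j.2 : ℤ)|)) := by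
          gcongr
          refine (abs_add_le _ _).trans_eq ?_
          rw [abs_mul, abs_mul, abs_mul, abs_of_pos (by linarith : 0 < M)]
      _ ≤ M * (2 * H ^ 2 + H * H * (M * D)) := by
          gcongr
          · exact abs_det_le ha hb _ _
          · exact ha _
          · exact ha _
          · exact hT _ i.2.2 _ j.2.2
      _ = _ := by ring

theorem card_le_of_forall_translate_not_dvd {Z W : ℕ} (hZ : 3 ≤ Z) (hW : 2 ≤ W)
    (hdisc : disc a b ≠ 0) {H : ℤ} (hH : 1 ≤ H) (ha : ∀ i, |a i| ≤ H) (hb : ∀ i, |b i| ≤ H)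
    {M : ℤ} (hM : 2 * H ^ 2 < M) {r D : ℤ} (hD : 0 ≤ D) {T : Finset ℤ}
    (hT : ∀ x ∈ T, ∀ y ∈ T, |x - y| ≤ D) {K : ℕ} (hK : Fintype.card ι * #T = K) (hZK : 2 * K ≤ Z)
    {κ : ℝ} (hκ : (K + K * K) * Real.log (H ^ 2 * M * (M * D + 2)) ≤ κ * (Z + 1))
    {X : ℕ} {S : Finset ℕ} (hS : S ⊆ range X)
    (hsift : ∀ n ∈ S, ∀ x ∈ T, ∀ i, ∀ p : ℕ, p.Prime → Z < p → p ≤ W →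
      ¬ (p : ℤ) ∣ a i * (r + (n - x) * M) + b i) :
    (#S : ℝ) ≤ 2 * Real.exp (K * (6 + κ)) * X * (Real.log Z / Real.log (W + 1 : ℕ)) ^ K +
      (W : ℝ) ^ (48 * K + 4) := by
  have hcard : Fintype.card (ι × T) = K := by rw [Fintype.card_prod, Fintype.card_coe, hK]
  have hne := disc_translate_ne_zero hdisc ha hb hM r T
  have hbound := abs_disc_translate_le hH ha hb (by linarith [sq_nonneg H] : 1 ≤ M) r hD hT
  rw [← hcard] at hZK hκ ⊢
  refine card_le_of_forall_not_dvd hZ hZK hW hne (le_trans ?_ hκ) hS fun n hn i p hp hZp hpW hdvd =>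
    hsift n hn i.2 i.2.2 i.1 p hp hZp hpW ?_
  · have hboundR := Int.cast_le (R := ℝ).2 hbound
    push_cast at hboundR
    have hlog := Real.log_le_log (abs_pos.2 (Int.cast_ne_zero.2 hne)) hboundR
    rw [Real.log_pow] at hlog
    push_cast at hlog
    exact hlog
  · convert hdvd using 1
    simp only [translateCoeff, translateConst]
    ring

end Translates

section Primorial

theorem primor_pos (z : ℝ) : 0 < primor z := primorial_pos ⌊z⌋₊

theorem primor_log_div_three_le {N : ℕ} (hN : 1 ≤ N) :
    (primor (Real.log N / 3) : ℝ) ≤ (N : ℝ) ^ (1 / 2 : ℝ) := by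
  have hN : (1 : ℝ) ≤ N := mod_cast hN
  have hlog : 0 ≤ Real.log N := Real.log_nonneg hN
  have hlog_four : Real.log 4 ≤ 3 / 2 := by
    rw [show (4 : ℝ) = 2 ^ 2 by norm_num, Real.log_pow]
    push_cast
    linarith [Real.log_two_lt_d9]
  calc (primor (Real.log N / 3) : ℝ) ≤ (4 : ℝ) ^ ⌊Real.log N / 3⌋₊ :=
        mod_cast primorial_le_four_pow ⌊Real.log N / 3⌋₊
    _ ≤ (4 : ℝ) ^ (Real.log N / 3) := by
        rw [← Real.rpow_natCast]
        exact Real.rpow_le_rpow_of_exponent_le (by norm_num) (Nat.floor_le (by positivity))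
    _ ≤ (N : ℝ) ^ (1 / 2 : ℝ) := by
        rw [Real.rpow_def_of_pos (by norm_num), Real.rpow_def_of_pos (by linarith)]
        exact Real.exp_le_exp.2 (by nlinarith)

theorem rpow_half_le_of_div_primor_le {N : ℕ} (hN : 1 ≤ N) {x : ℝ}
    (hx : N / primor (Real.log N / 3) ≤ x) : (N : ℝ) ^ (1 / 2 : ℝ) ≤ x := by
  have hM : (0 : ℝ) < primor (Real.log N / 3) := mod_cast primor_pos _
  refine le_trans ((le_div_iff₀ hM).2 ?_) hx
  calc (N : ℝ) ^ (1 / 2 : ℝ) * primor (Real.log N / 3)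
      ≤ (N : ℝ) ^ (1 / 2 : ℝ) * (N : ℝ) ^ (1 / 2 : ℝ) := by
        gcongr; exact primor_log_div_three_le hN
    _ = N := by rw [← Real.rpow_add (mod_cast hN)]; norm_num

theorem tendsto_primor : Tendsto primor atTop atTop := by
  refine tendsto_atTop.2 fun n => ?_
  obtain ⟨p, hnp, hp⟩ := Nat.exists_infinite_primes n
  filter_upwards [eventually_ge_atTop (p : ℝ)] with z hz
  exact hnp.trans (Nat.le_of_dvd (primor_pos z) (hp.dvd_primorial_iff.2 (Nat.le_floor hz)))

end Primorial

section SiftedTranslates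

theorem tendsto_log_natCast : Tendsto (fun N : ℕ => Real.log N) atTop atTop :=
  Real.tendsto_log_atTop.comp tendsto_natCast_atTop_atTop

theorem eventually_log_pow_le_rpow (K : ℕ) {ε : ℝ} (hε : 0 < ε) :
    ∀ᶠ N : ℕ in atTop, Real.log N ^ K ≤ (N : ℝ) ^ ε := by
  have hlittleO := (isLittleO_log_rpow_rpow_atTop (K : ℝ) hε).bound one_pos
  filter_upwards [tendsto_natCast_atTop_atTop.eventually hlittleO] with N hN
  rw [Real.rpow_natCast, one_mul, Real.norm_of_nonneg (by positivity : 0 ≤ (N : ℝ) ^ ε)] at hN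
  exact (le_abs_self _).trans hN

theorem log_floor_div_log_floor_le {α : ℝ} (hα : 0 < α) {N : ℕ} (hN : 3 ≤ Real.log N) :
    Real.log ⌊Real.log N / 3⌋₊ / Real.log (⌊(N : ℝ) ^ α⌋₊ + 1 : ℕ) ≤
      α⁻¹ * (Real.log (Real.log N) / Real.log N) := by
  have hN₀ : (0 : ℝ) < N := by
    rcases N.eq_zero_or_pos with rfl | h
    · norm_num at hN
    · exact_mod_cast h
  have hnum : Real.log ⌊Real.log N / 3⌋₊ ≤ Real.log (Real.log N) := by
    refine Real.log_le_log (mod_cast Nat.floor_pos.2 (by linarith)) ?_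
    linarith [Nat.floor_le (by linarith : 0 ≤ Real.log N / 3)]
  have hden : α * Real.log N ≤ Real.log (⌊(N : ℝ) ^ α⌋₊ + 1 : ℕ) := by
    rw [← Real.log_rpow hN₀]
    push_cast
    exact Real.log_le_log (by positivity) (Nat.lt_floor_add_one _).le
  calc _ ≤ Real.log (Real.log N) / (α * Real.log N) :=
        div_le_div₀ (Real.log_nonneg (by linarith)) hnum (by positivity) hden
    _ = _ := by field_simp

theorem floor_rpow_pow_le {x : ℝ} (hx : 1 ≤ x) {α β : ℝ} {m : ℕ} (h : α * m ≤ β) :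
    (⌊x ^ α⌋₊ : ℝ) ^ m ≤ x ^ β := by
  calc (⌊x ^ α⌋₊ : ℝ) ^ m ≤ (x ^ α) ^ m := by
        gcongr; exact Nat.floor_le (by positivity)
    _ = x ^ (α * m) := by rw [Real.rpow_mul_natCast (by positivity)]
    _ ≤ x ^ β := Real.rpow_le_rpow_of_exponent_le hx h

theorem rpow_quarter_le_mul_pow {x y : ℝ} (hx : Real.exp 1 ≤ Real.log x) {K : ℕ}
    (hK : Real.log x ^ K ≤ x ^ (1 / 4 : ℝ)) (hy : x ^ (1 / 2 : ℝ) ≤ y) (hx₀ : 0 < x) :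
    x ^ (1 / 4 : ℝ) ≤ y * (Real.log (Real.log x) / Real.log x) ^ K := by
  have hlog : 0 < Real.log x := (Real.exp_pos 1).trans_le hx
  have hloglog : 1 ≤ Real.log (Real.log x) := (Real.le_log_iff_exp_le hlog).2 hx
  rw [div_pow, mul_div_assoc', le_div_iff₀ (by positivity)]
  calc x ^ (1 / 4 : ℝ) * Real.log x ^ K ≤ x ^ (1 / 4 : ℝ) * x ^ (1 / 4 : ℝ) := by gcongr
    _ = x ^ (1 / 2 : ℝ) := by rw [← Real.rpow_add hx₀]; norm_num
    _ ≤ y := hy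
    _ ≤ y * Real.log (Real.log x) ^ K :=
        le_mul_of_one_le_right ((Real.rpow_nonneg hx₀.le _).trans hy) (one_le_pow₀ hloglog)

theorem log_sq_mul_mul_le {H M P D x : ℝ} (hH : 0 < H) (hM : 0 < M) (hP : 0 ≤ P) (hx : 1 ≤ x)
    (hMx : M ≤ x) (hMP : M * P ≤ D * x) (hHx : H ^ 2 * (2 * D + 2) ≤ x) :
    Real.log (H ^ 2 * M * (M * (2 * P) + 2)) ≤ 3 * Real.log x := by
  have : 0 ≤ M * P := by positivity
  have hbound : H ^ 2 * M * (M * (2 * P) + 2) ≤ x ^ 3 := by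
    calc H ^ 2 * M * (M * (2 * P) + 2) ≤ H ^ 2 * x * (2 * (D * x) + 2 * x) := by
          refine mul_le_mul (by gcongr) (by linarith) (by positivity) (by positivity)
      _ = H ^ 2 * (2 * D + 2) * x ^ 2 := by ring
      _ ≤ x * x ^ 2 := by gcongr
      _ = x ^ 3 := by ring
  calc _ ≤ Real.log (x ^ 3) := Real.log_le_log (by positivity) hbound
    _ = 3 * Real.log x := by rw [Real.log_pow]; norm_num

variable {ι : Type*} [Fintype ι] [DecidableEq ι] {a b : ι → ℤ}

theorem card_le_of_sifted_translates (hdisc : disc a b ≠ 0) {H : ℤ} (hH : 1 ≤ H)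
    (ha : ∀ i, |a i| ≤ H) (hb : ∀ i, |b i| ≤ H) {K N : ℕ} (hlog : 9 ≤ Real.log N)
    (hlogK : 6 * K + 3 ≤ Real.log N) (hM : 2 * H ^ 2 < primor (Real.log N / 3)) {D : ℝ}
    (hHN : (H : ℝ) ^ 2 * (2 * D + 2) ≤ N) (hpow : Real.log N ^ K ≤ (N : ℝ) ^ (1 / 4 : ℝ)) {α : ℝ}
    (hα₀ : 0 < α) (hα : α * (48 * K + 4 : ℕ) ≤ 1 / 4) (hW : 2 ≤ (N : ℝ) ^ α) {P : ℕ}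
    (hP₁ : (N : ℝ) / primor (Real.log N / 3) ≤ P) (hP₂ : (P : ℝ) ≤ D * N / primor (Real.log N / 3))
    {r : ℤ} {T : Finset ℤ} (hTK : Fintype.card ι * #T = K)
    (hT : ∀ x ∈ T, ∀ y ∈ T, |x - y| ≤ 2 * P) {S : Finset ℕ} (hS : S ⊆ range P)
    (hsift : ∀ n ∈ S, ∀ x ∈ T, ∀ i, ∀ p : ℕ, p.Prime → Real.log N / 3 < p →
      (p : ℝ) ≤ (N : ℝ) ^ α → ¬ (p : ℤ) ∣ a i * (r + (n - x) * primor (Real.log N / 3)) + b i) :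
    (#S : ℝ) ≤ (2 * Real.exp (K * (6 + 9 * (K + K * K))) * α⁻¹ ^ K + 1) * P *
      (Real.log (Real.log N) / Real.log N) ^ K := by
  set M := primor (Real.log N / 3)
  set Z := ⌊Real.log N / 3⌋₊
  set W := ⌊(N : ℝ) ^ α⌋₊
  set ρ := Real.log (Real.log N) / Real.log N
  have hN : 1 ≤ N := Nat.one_le_iff_ne_zero.2 fun h => by norm_num [h] at hlog
  have hN₁ : (1 : ℝ) ≤ N := mod_cast hN
  have hM₀ : (0 : ℝ) < M := mod_cast primor_pos _
  have hMN : (M : ℝ) ≤ N := (primor_log_div_three_le hN).trans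
    (Real.rpow_le_self_of_one_le hN₁ (by norm_num))
  have hMP : (M : ℝ) * P ≤ D * N := by rw [mul_comm]; exact (le_div_iff₀ hM₀).1 hP₂
  have hdisc_log : (K + K * K) * Real.log ((H : ℝ) ^ 2 * (M : ℤ) * ((M : ℤ) * (2 * P : ℤ) + 2)) ≤
      9 * (K + K * K) * (Z + 1) := by
    have hlog₃ := log_sq_mul_mul_le (mod_cast hH : (0 : ℝ) < H) hM₀ P.cast_nonneg hN₁ hMN hMP hHN
    push_cast
    calc _ ≤ (K + K * K) * (3 * Real.log N) := by gcongr
      _ ≤ (K + K * K) * (3 * (3 * (Z + 1))) := by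
          gcongr; linarith [Nat.lt_floor_add_one (Real.log N / 3)]
      _ = _ := by ring
  have hsieve := card_le_of_forall_translate_not_dvd (Z := Z) (W := W)
    (Nat.le_floor (by push_cast; linarith)) (Nat.le_floor (mod_cast hW)) hdisc hH ha hb hM
    (by positivity) hT hTK (Nat.le_floor (by push_cast; linarith)) hdisc_log hS
    fun n hn x hx i p hp hZp hpW => hsift n hn x hx i p hp (Nat.lt_of_floor_lt hZp)
      (Nat.le_floor_iff (by positivity) |>.1 hpW)
  have hexp : Real.exp 1 ≤ Real.log N := by linarith [Real.exp_one_lt_d9]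
  have hlogs := log_floor_div_log_floor_le hα₀ (by linarith : 3 ≤ Real.log N)
  calc (#S : ℝ) ≤ 2 * Real.exp (K * (6 + 9 * (K + K * K))) * P *
        (Real.log Z / Real.log (W + 1 : ℕ)) ^ K + (W : ℝ) ^ (48 * K + 4) := hsieve
    _ ≤ 2 * Real.exp (K * (6 + 9 * (K + K * K))) * P * (α⁻¹ * ρ) ^ K + P * ρ ^ K := by
        gcongr
        exact (floor_rpow_pow_le hN₁ hα).trans (rpow_quarter_le_mul_pow hexp hpow
          (rpow_half_le_of_div_primor_le hN hP₁) (by linarith))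
    _ = _ := by rw [mul_pow]; ring

theorem exists_card_le_of_sifted_translates (hdisc : disc a b ≠ 0) {θ : ℝ} (hθ : 0 < θ) (D : ℝ)
    (l : ℕ) :
    ∃ C : ℝ, 0 ≤ C ∧ ∀ᶠ N : ℕ in atTop, ∀ P : ℕ, (N : ℝ) / primor (Real.log N / 3) ≤ P →
      (P : ℝ) ≤ D * N / primor (Real.log N / 3) → ∀ (r : ℤ) (T : Finset ℤ), #T = l →
      (∀ x ∈ T, ∀ y ∈ T, |x - y| ≤ 2 * P) → ∀ S ⊆ range P,
      (∀ n ∈ S, ∀ x ∈ T, ∀ i, ∀ p : ℕ, p.Prime → Real.log N / 3 < p → (p : ℝ) ≤ (N : ℝ) ^ θ →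
        ¬ (p : ℤ) ∣ a i * (r + (n - x) * primor (Real.log N / 3)) + b i) →
      (#S : ℝ) ≤ C * P * (Real.log (Real.log N) / Real.log N) ^ (Fintype.card ι * l) := by
  set K := Fintype.card ι * l
  set H : ℤ := ∑ i, (|a i| + |b i|) + 1
  set α : ℝ := min θ (1 / 4 / (48 * K + 4 : ℕ))
  have hα₀ : 0 < α := lt_min hθ (by positivity)
  have hα₁ : α * (48 * K + 4 : ℕ) ≤ 1 / 4 :=
    (le_div_iff₀ (by positivity)).1 (min_le_right _ _)
  have hle : ∀ i, |a i| + |b i| ≤ H := fun i =>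
    (single_le_sum (f := fun i => |a i| + |b i|) (fun i _ => by positivity) (mem_univ i)).trans
      (by omega)
  have hH₁ : 1 ≤ H := le_add_of_nonneg_left (by positivity)
  refine ⟨2 * Real.exp (K * (6 + 9 * (K + K * K))) * α⁻¹ ^ K + 1, by positivity, ?_⟩
  filter_upwards [tendsto_log_natCast.eventually_ge_atTop 9,
    tendsto_log_natCast.eventually_ge_atTop (6 * K + 3),
    ((tendsto_primor.comp (tendsto_log_natCast.atTop_div_const three_pos)).eventually_gt_atTop
      (2 * H ^ 2).toNat),
    ((tendsto_rpow_atTop hα₀).comp tendsto_natCast_atTop_atTop).eventually_ge_atTop 2,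
    tendsto_natCast_atTop_atTop.eventually_ge_atTop ((H : ℝ) ^ 2 * (2 * D + 2)),
    eventually_log_pow_le_rpow K (by norm_num : (0 : ℝ) < 1 / 4), eventually_ge_atTop 1]
    with N hlog₉ hlogK hM hW hHN hpow hN P hP₁ hP₂ r T hTl hT S hS hsift
  exact card_le_of_sifted_translates hdisc hH₁ (fun i => by linarith [hle i, abs_nonneg (b i)])
    (fun i => by linarith [hle i, abs_nonneg (a i)]) hlog₉ hlogK
    ((Int.toNat_lt (by positivity)).1 hM) hHN hpow hα₀ hα₁ hW hP₁ hP₂ (by rw [hTl]) hT hS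
    fun n hn x hx i p hp hZp hpN => hsift n hn x hx i p hp hZp
      (hpN.trans (Real.rpow_le_rpow_of_exponent_le (mod_cast hN) (min_le_left _ _)))

end SiftedTranslates

/-! ### Moments and level sets -/

section Moments

theorem pow_le_two_pow_mul_descFactorial_add (x l : ℕ) :
    x ^ l ≤ 2 ^ l * x.descFactorial l + (2 * l) ^ l := by
  rcases le_or_gt x (2 * l) with h | h
  · exact (Nat.pow_le_pow_left h l).trans (Nat.le_add_left _ _)
  · calc x ^ l ≤ (2 * (x + 1 - l)) ^ l := Nat.pow_le_pow_left (by omega) l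
      _ = 2 ^ l * (x + 1 - l) ^ l := mul_pow _ _ _
      _ ≤ 2 ^ l * x.descFactorial l := Nat.mul_le_mul_left _ (Nat.pow_sub_le_descFactorial _ _)
      _ ≤ _ := Nat.le_add_right _ _

section Bipartite

variable {α β : Type*} (r : α → β → Prop) [∀ a b, Decidable (r a b)]

theorem sum_choose_card_filter (s : Finset α) (t : Finset β) (l : ℕ) :
    ∑ a ∈ s, (#{b ∈ t | r a b}).choose l =
      ∑ T ∈ t.powersetCard l, #{a ∈ s | ∀ b ∈ T, r a b} := by
  refine Eq.trans (sum_congr rfl fun a _ => ?_)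
    (sum_card_bipartiteAbove_eq_sum_card_bipartiteBelow fun a T => ∀ b ∈ T, r a b)
  rw [← card_powersetCard, bipartiteAbove]
  congr 1
  ext T
  simp only [mem_powersetCard, mem_filter, subset_iff]
  grind

theorem sum_card_filter_pow_le {s : Finset α} {t : Finset β} {l : ℕ} {R : ℝ} (hR₀ : 0 ≤ R)
    (hR : ∀ T ⊆ t, #T = l → (#{a ∈ s | ∀ b ∈ T, r a b} : ℝ) ≤ R) :
    ∑ a ∈ s, (#{b ∈ t | r a b} : ℝ) ^ l ≤ 2 ^ l * #t ^ l * R + (2 * l) ^ l * #s := by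
  have hchoose : ∑ a ∈ s, ((#{b ∈ t | r a b}).choose l : ℝ) ≤ (#t).choose l * R := by
    rw [← Nat.cast_sum, sum_choose_card_filter, Nat.cast_sum, ← card_powersetCard, ← nsmul_eq_mul]
    exact sum_le_card_nsmul _ _ _ fun T hT =>
      hR T (mem_powersetCard.1 hT).1 (mem_powersetCard.1 hT).2
  have hfactorial : ∑ a ∈ s, ((#{b ∈ t | r a b}).descFactorial l : ℝ) ≤ #t ^ l * R := by
    calc _ = l.factorial * ∑ a ∈ s, ((#{b ∈ t | r a b}).choose l : ℝ) := by
          simp only [Nat.descFactorial_eq_factorial_mul_choose, Nat.cast_mul, mul_sum]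
      _ ≤ l.factorial * ((#t).choose l * R) := by gcongr
      _ = ((#t).descFactorial l : ℕ) * R := by
          rw [Nat.descFactorial_eq_factorial_mul_choose]; push_cast; ring
      _ ≤ #t ^ l * R := by gcongr; exact_mod_cast Nat.descFactorial_le_pow _ _
  calc ∑ a ∈ s, (#{b ∈ t | r a b} : ℝ) ^ l
      ≤ ∑ a ∈ s, (2 ^ l * ((#{b ∈ t | r a b}).descFactorial l : ℝ) + (2 * l) ^ l) :=
        sum_le_sum fun a _ => mod_cast pow_le_two_pow_mul_descFactorial_add _ l
    _ = 2 ^ l * ∑ a ∈ s, ((#{b ∈ t | r a b}).descFactorial l : ℝ) + (2 * l) ^ l * #s := by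
        rw [sum_add_distrib, ← mul_sum, sum_const, nsmul_eq_mul, mul_comm (#s : ℝ)]
    _ ≤ 2 ^ l * (#t ^ l * R) + (2 * l) ^ l * #s := by gcongr
    _ = _ := by ring

end Bipartite

section ZModLifts

variable {P : ℕ} [NeZero P]

/-- The integers in `[-P, P)` whose residue modulo `P` lies in `B`. For `0 ≤ n < P` and `0 ≤ a ≤ P`
with `n - a ∈ B` modulo `P`, the integer `n - a` itself is one of them. -/
noncomputable def intLifts (B : Finset (ZMod P)) : Finset ℤ :=
  (Ico (-P : ℤ) P).filter fun x : ℤ => (x : ZMod P) ∈ B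

theorem card_intLifts_le (B : Finset (ZMod P)) : #(intLifts B) ≤ 2 * #B := by
  have hP : (0 : ℤ) < P := mod_cast NeZero.pos P
  refine card_le_mul_card_image_of_maps_to (s := intLifts B) (fun x hx => (mem_filter.1 hx).2) 2
    fun y _ => ?_
  have hfiber : ((intLifts B).filter fun x : ℤ => (x : ZMod P) = y) ⊆
      (Ico (-P : ℤ) P).filter fun x : ℤ => x ≡ y.val [ZMOD P] := fun x hx => by
    simp only [intLifts, mem_filter] at hx
    refine mem_filter.2 ⟨hx.1.1, (ZMod.intCast_eq_intCast_iff _ _ _).1 ?_⟩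
    simp [hx.2]
  have hcard := Int.Ico_filter_modEq_card (-P : ℤ) P hP y.val
  have hP₀ : (P : ℚ) ≠ 0 := mod_cast NeZero.ne P
  have htop : ⌈((P : ℤ) - (y.val : ℤ) : ℚ) / (P : ℤ)⌉ = ⌈-(y.val : ℚ) / P⌉ + 1 := by
    rw [← Int.ceil_add_one]; congr 1; push_cast; field_simp; ring
  have hbot : ⌈((-P : ℤ) - (y.val : ℤ) : ℚ) / (P : ℤ)⌉ = ⌈-(y.val : ℚ) / P⌉ - 1 := by
    rw [← Int.ceil_sub_one]; congr 1; push_cast; field_simp; ring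
  rw [htop, hbot] at hcard
  have := card_le_card hfiber
  omega

theorem card_sub_mem_image_le {A : Finset ℕ} (hA : ∀ a ∈ A, a ≤ P) (B : Finset (ZMod P))
    (n : ZMod P) :
    #{y ∈ B | n - y ∈ A.image (Nat.cast : ℕ → ZMod P)} ≤
      #{x ∈ intLifts B | ∃ a ∈ A, (a : ℤ) = n.val - x} := by
  refine (card_le_card fun y hy => ?_).trans (card_image_le (f := (Int.cast : ℤ → ZMod P)))
  obtain ⟨hyB, hyA⟩ := mem_filter.1 hy
  obtain ⟨a, haA, hay⟩ := mem_image.1 hyA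
  have hcast : ((n.val - a : ℤ) : ZMod P) = y := by simp [hay]
  have ha := hA a haA
  have hn := n.val_lt
  refine mem_image.2 ⟨n.val - a, mem_filter.2 ⟨mem_filter.2 ⟨mem_Ico.2 ⟨?_, ?_⟩, ?_⟩, a, haA, ?_⟩,
    hcast⟩
  · omega
  · omega
  · rwa [hcast]
  · omega

theorem sum_card_sub_mem_image_pow_le {A : Finset ℕ} (hA : ∀ a ∈ A, a ≤ P) (B : Finset (ZMod P))
    {l : ℕ} {R : ℝ} (hR₀ : 0 ≤ R)
    (hR : ∀ T : Finset ℤ, #T = l → (∀ x ∈ T, ∀ y ∈ T, |x - y| ≤ 2 * P) →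
      (#((range P).filter fun n : ℕ => ∀ x ∈ T, ∃ a ∈ A, (a : ℤ) = n - x) : ℝ) ≤ R) :
    ∑ n, (#{y ∈ B | n - y ∈ A.image (Nat.cast : ℕ → ZMod P)} : ℝ) ^ l ≤
      2 ^ l * (2 * #B) ^ l * R + (2 * l) ^ l * P := by
  have hdiam : ∀ T ⊆ intLifts B, ∀ x ∈ T, ∀ y ∈ T, |x - y| ≤ 2 * P := fun T hT x hx y hy => by
    have hx := mem_Ico.1 (mem_filter.1 (hT hx)).1
    have hy := mem_Ico.1 (mem_filter.1 (hT hy)).1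
    exact abs_le.2 ⟨by omega, by omega⟩
  calc ∑ n, (#{y ∈ B | n - y ∈ A.image (Nat.cast : ℕ → ZMod P)} : ℝ) ^ l
      ≤ ∑ n : ZMod P, (#{x ∈ intLifts B | ∃ a ∈ A, (a : ℤ) = n.val - x} : ℝ) ^ l := by
        gcongr with n; exact card_sub_mem_image_le hA B n
    _ = ∑ n ∈ range P, (#{x ∈ intLifts B | ∃ a ∈ A, (a : ℤ) = n - x} : ℝ) ^ l := by
        rw [← sum_range_natCast_zmod]
        exact sum_congr rfl fun n hn => by rw [ZMod.val_cast_of_lt (mem_range.1 hn)]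
    _ ≤ 2 ^ l * #(intLifts B) ^ l * R + (2 * l) ^ l * #(range P) :=
        sum_card_filter_pow_le (fun (n : ℕ) x => ∃ a ∈ A, (a : ℤ) = n - x) hR₀
          fun T hT hTl => hR T hTl (hdiam T hT)
    _ ≤ _ := by
        rw [card_range]
        gcongr
        exact_mod_cast card_intLifts_le B

end ZModLifts

end Moments

section LevelSets

variable {ι : Type*} {s : Finset ι} {f : ι → ℝ}

theorem half_sum_le_sum_filter_le {θ : ℝ} (hθ₀ : 0 ≤ θ) (hθ : 2 * (#s * θ) ≤ ∑ i ∈ s, f i) :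
    (∑ i ∈ s, f i) / 2 ≤ ∑ i ∈ s with θ ≤ f i, f i := by
  have hlow : ∑ i ∈ s with ¬θ ≤ f i, f i ≤ #s * θ :=
    calc ∑ i ∈ s with ¬θ ≤ f i, f i ≤ #{i ∈ s | ¬θ ≤ f i} * θ := by
          rw [← nsmul_eq_mul]
          exact sum_le_card_nsmul _ _ _ fun i hi => (not_le.1 (mem_filter.1 hi).2).le
      _ ≤ #s * θ := by gcongr; exact filter_subset _ _
  linarith [sum_filter_add_sum_filter_not s (fun i => θ ≤ f i) f]

theorem half_sum_pow_le_card_filter_le_mul {θ : ℝ} (hθ₀ : 0 ≤ θ)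
    (hθ : 2 * (#s * θ) ≤ ∑ i ∈ s, f i) (hf : ∀ i ∈ s, 0 ≤ f i) (m : ℕ) :
    ((∑ i ∈ s, f i) / 2) ^ (m + 1) ≤ #{i ∈ s | θ ≤ f i} ^ m * ∑ i ∈ s, f i ^ (m + 1) := by
  calc ((∑ i ∈ s, f i) / 2) ^ (m + 1)
      ≤ (∑ i ∈ s with θ ≤ f i, f i) ^ (m + 1) :=
        pow_le_pow_left₀ (div_nonneg (sum_nonneg hf) two_pos.le)
          (half_sum_le_sum_filter_le hθ₀ hθ) _
    _ ≤ #{i ∈ s | θ ≤ f i} ^ m * ∑ i ∈ s with θ ≤ f i, f i ^ (m + 1) :=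
        pow_sum_le_card_mul_sum_pow (fun i hi => hf i (mem_filter.1 hi).1) m
    _ ≤ _ :=
        mul_le_mul_of_nonneg_left
          (sum_le_sum_of_subset_of_nonneg (filter_subset _ s) fun i hi _ => pow_nonneg (hf i hi) _)
          (by positivity)

theorem mul_card_le_card_filter_half_le (hf : ∀ i ∈ s, 0 ≤ f i) (hsum : ∑ i ∈ s, f i = #s)
    {K δ : ℝ} (hK : 1 ≤ K) (hδ : 0 < δ) {l : ℕ} (hl : 2 ≤ l)
    (hmoment : ∑ i ∈ s, f i ^ l ≤ K * #s / δ ^ l) :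
    1 / (2 ^ l * K) * δ ^ ((l : ℝ) / (l - 1)) * #s ≤ #{i ∈ s | 1 / 2 ≤ f i} := by
  obtain ⟨m, rfl⟩ : ∃ m, l = m + 2 := ⟨l - 2, by omega⟩
  have : 0 < K := one_pos.trans_le hK
  rcases s.eq_empty_or_nonempty with rfl | hs
  · simp
  have : (0 : ℝ) < #s := mod_cast hs.card_pos
  have hpow : (δ ^ (((m + 2 : ℕ) : ℝ) / ((m + 2 : ℕ) - 1))) ^ (m + 1) = δ ^ (m + 2) := by
    rw [← Real.rpow_mul_natCast hδ.le, ← Real.rpow_natCast δ]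
    congr 1
    push_cast
    rw [show (m : ℝ) + 2 - 1 = m + 1 by ring, div_mul_cancel₀ _ (by positivity)]
  have hconst : (1 / (2 ^ (m + 2) * K)) ^ (m + 1) ≤ 1 / (2 ^ (m + 2) * K) :=
    pow_le_of_le_one (by positivity)
      (div_le_one_of_le₀ (one_le_mul_of_one_le_of_one_le (one_le_pow₀ one_le_two) hK)
        (by positivity)) m.succ_ne_zero
  have hlevel := half_sum_pow_le_card_filter_le_mul (θ := 1 / 2) (by norm_num)
    (by rw [hsum]; linarith) hf (m + 1)
  rw [hsum] at hlevel
  refine le_of_pow_le_pow_left₀ m.succ_ne_zero (Nat.cast_nonneg _) ?_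
  calc (1 / (2 ^ (m + 2) * K) * δ ^ (((m + 2 : ℕ) : ℝ) / ((m + 2 : ℕ) - 1)) * #s) ^ (m + 1)
      ≤ 1 / (2 ^ (m + 2) * K) * δ ^ (m + 2) * #s ^ (m + 1) := by
        rw [mul_pow, mul_pow, hpow]; gcongr
    _ = (#s / 2) ^ (m + 2) / (K * #s / δ ^ (m + 2)) := by rw [div_pow]; field_simp; ring
    _ ≤ #{i ∈ s | 1 / 2 ≤ f i} ^ (m + 1) := by
        rw [div_le_iff₀ (by positivity)]
        exact hlevel.trans (by gcongr)

end LevelSets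

section Convolution

variable {P : ℕ} [Fact P.Prime]

theorem convP_fCfun_apply (A B : Finset (ZMod P)) (n : ZMod P) :
    convP (fCfun A) (fCfun B) n = P / (#A * #B) * #{y ∈ B | n - y ∈ A} := by
  have hP : (P : ℝ) ≠ 0 := mod_cast NeZero.ne P
  have hcard : (#{y ∈ B | n - y ∈ A} : ℝ) =
      ∑ y, (if n - y ∈ A then (1 : ℝ) else 0) * if y ∈ B then 1 else 0 := by
    simp only [← sum_boole, mul_ite, mul_one, mul_zero, sum_ite_mem, univ_inter]
  rw [hcard, convP, mul_sum, mul_sum]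
  refine sum_congr rfl fun y _ => ?_
  simp only [fCfun]
  field_simp

theorem convP_fCfun_nonneg (A B : Finset (ZMod P)) (n : ZMod P) :
    0 ≤ convP (fCfun A) (fCfun B) n := by
  rw [convP_fCfun_apply]
  positivity

theorem sum_convP_fCfun {A B : Finset (ZMod P)} (hA : A.Nonempty) (hB : B.Nonempty) :
    ∑ n, convP (fCfun A) (fCfun B) n = P := by
  have hpairs : ∑ n, #{y ∈ B | n - y ∈ A} = #B * #A := by
    simp_rw [card_filter]
    rw [sum_comm, sum_const_nat fun y _ => ?_]
    rw [← card_filter, ← card_map (Equiv.addRight y).toEmbedding (s := A)]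
    congr 1
    ext n
    simp [sub_eq_add_neg]
  have hA₀ : (#A : ℝ) ≠ 0 := mod_cast hA.card_ne_zero
  have hB₀ : (#B : ℝ) ≠ 0 := mod_cast hB.card_ne_zero
  simp_rw [convP_fCfun_apply]
  rw [← mul_sum, ← Nat.cast_sum, hpairs]
  push_cast
  field_simp

theorem pow_mul_card_le_LamL {s : ℕ} (c : Fin s → ℤ) {f : ZMod P → ℝ} (hf : ∀ n, 0 ≤ f n)
    {θ : ℝ} (hθ : 0 ≤ θ) :
    θ ^ s * #{x : Fin s → ZMod P | (∀ i, x i ∈ ({n | θ ≤ f n} : Finset (ZMod P))) ∧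
      ∑ i, (c i : ZMod P) * x i = 0} ≤ LamL c f := by
  have hterm : ∀ x ∈ ({x : Fin s → ZMod P | (∀ i, x i ∈ ({n | θ ≤ f n} : Finset (ZMod P))) ∧
      ∑ i, (c i : ZMod P) * x i = 0} : Finset _), θ ^ s ≤ ∏ i, f (x i) := fun x hx => by
    rw [← Fin.prod_const]
    exact prod_le_prod (fun _ _ => hθ) fun i _ => (mem_filter.1 ((mem_filter.1 hx).2.1 i)).2
  rw [mul_comm, ← nsmul_eq_mul]
  exact (card_nsmul_le_sum _ _ _ hterm).trans <|
    sum_le_sum_of_subset_of_nonneg (monotone_filter_right _ fun _ _ hx => hx.2)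
      fun _ _ _ => prod_nonneg fun _ _ => hf _

theorem le_LamL_of_sum_pow_le {s : ℕ} (c : Fin s → ℤ) {h : ℝ → ℝ}
    (hh : ∀ η : ℝ, 0 < η → η ≤ 1 → ∀ A : Finset (ZMod P), η * P ≤ #A → h η * P ^ (s - 1) ≤
      #{x : Fin s → ZMod P | (∀ i, x i ∈ A) ∧ ∑ i, (c i : ZMod P) * x i = 0})
    {f : ZMod P → ℝ} (hf : ∀ n, 0 ≤ f n) (hsum : ∑ n, f n = P)
    {K δ : ℝ} (hK : 1 ≤ K) (hδ : 0 < δ) {l : ℕ} (hl : 2 ≤ l)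
    (hmoment : ∑ n, f n ^ l ≤ K * P / δ ^ l) :
    (1 / 2) ^ s * h (1 / (2 ^ l * K) * δ ^ ((l : ℝ) / (l - 1))) * P ^ (s - 1) ≤ LamL c f := by
  set η := 1 / (2 ^ l * K) * δ ^ ((l : ℝ) / (l - 1))
  have hη₀ : 0 < η := by positivity
  have hcard : #(univ : Finset (ZMod P)) = P := by rw [card_univ, ZMod.card]
  have hlevel : η * P ≤ #{n | 1 / 2 ≤ f n} := by
    have := mul_card_le_card_filter_half_le (fun n _ => hf n) (by rw [hsum, hcard]) hK hδ hl
      (by rwa [hcard])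
    rwa [hcard] at this
  have hη₁ : η ≤ 1 := by
    have hle : (#{n | 1 / 2 ≤ f n} : ℝ) ≤ P :=
      mod_cast (card_filter_le univ _).trans_eq hcard
    exact (mul_le_iff_le_one_left (mod_cast NeZero.pos P)).1 (hlevel.trans hle)
  rw [mul_assoc]
  exact (mul_le_mul_of_nonneg_left (hh η hη₀ hη₁ _ hlevel) (by positivity)).trans
    (pow_mul_card_le_LamL c hf (by norm_num))

theorem sum_convP_fCfun_pow_le {A : Finset ℕ} (hA : ∀ a ∈ A, a ≤ P) {B : Finset (ZMod P)}
    {l : ℕ} {C α ρ : ℝ} (hC : 0 ≤ C) (hα : 0 < α) (hρ : 0 < ρ)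
    (hcardA : α * ρ * P ≤ #(A.image (Nat.cast : ℕ → ZMod P))) (hcardB : 1 ≤ #B * ρ)
    (hR : ∀ T : Finset ℤ, #T = l → (∀ x ∈ T, ∀ y ∈ T, |x - y| ≤ 2 * P) →
      (#((range P).filter fun n : ℕ => ∀ x ∈ T, ∃ a ∈ A, (a : ℤ) = n - x) : ℝ) ≤
        C * P * ρ ^ l) :
    ∑ n, convP (fCfun (A.image (Nat.cast : ℕ → ZMod P))) (fCfun B) n ^ l ≤
      (4 ^ l * C + (2 * l) ^ l) * P / α ^ l := by
  set A' := A.image (Nat.cast : ℕ → ZMod P) with hA'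
  have hP : (0 : ℝ) < P := mod_cast NeZero.pos P
  have hA₀ : (0 : ℝ) < #A' := lt_of_lt_of_le (by positivity) hcardA
  have hB₀ : (0 : ℝ) < #B := pos_of_mul_pos_left (one_pos.trans_le hcardB) hρ.le
  have hfactor : P / (#A' * #B : ℝ) ≤ 1 / (α * (#B * ρ)) := by
    rw [div_le_div_iff₀ (by positivity) (by positivity)]
    calc P * (α * (#B * ρ)) = α * ρ * P * #B := by ring
      _ ≤ #A' * #B := by gcongr
      _ = _ := (one_mul _).symm
  have hcount := sum_card_sub_mem_image_pow_le hA B (by positivity) hR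
  rw [← hA'] at hcount
  clear_value A'
  calc ∑ n, convP (fCfun A') (fCfun B) n ^ l
      = (P / (#A' * #B : ℝ)) ^ l * ∑ n, (#{y ∈ B | n - y ∈ A'} : ℝ) ^ l := by
        simp_rw [convP_fCfun_apply, mul_pow, ← mul_sum]
    _ ≤ (1 / (α * (#B * ρ))) ^ l *
          (2 ^ l * (2 * #B) ^ l * (C * P * ρ ^ l) + (2 * l) ^ l * P) := by gcongr
    _ ≤ (1 / (α * (#B * ρ))) ^ l *
          (2 ^ l * (2 * #B) ^ l * (C * P * ρ ^ l) + (2 * l) ^ l * P * (#B * ρ) ^ l) := by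
        gcongr _ * (_ + ?_)
        exact le_mul_of_one_le_right (by positivity) (one_le_pow₀ hcardB)
    _ = (4 ^ l * C + (2 * l) ^ l) * P / α ^ l := by
        rw [show (4 : ℝ) = 2 * 2 by norm_num]
        simp only [mul_pow, div_pow, one_pow]
        field_simp

end Convolution

/-! ### Transference -/

section SiftedProgressions

theorem not_dvd_of_mem_SFset {F : ℤ → ℤ} {N n : ℕ} {z : ℝ} (hn : n ∈ SFset F N z) {p : ℕ}
    (hp : p.Prime) (hpz : (p : ℝ) ≤ z) : ¬ (p : ℤ) ∣ F n := fun hdvd => by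
  have hmem : p ∈ (range (⌊z⌋₊ + 1)).filter Nat.Prime :=
    mem_filter.2 ⟨mem_range.2 (Nat.lt_succ_of_le (Nat.le_floor hpz)), hp⟩
  have hprimor : (p : ℤ) ∣ primor z := mod_cast dvd_prod_of_mem (fun p => p) hmem
  have hgcd := Int.dvd_coe_gcd hdvd hprimor
  rw [(mem_filter.1 hn).2] at hgcd
  exact hp.one_lt.ne' (mod_cast Int.eq_one_of_dvd_one (Nat.cast_nonneg p) hgcd)

variable {A : Finset ℕ} {N M P r : ℕ}

theorem not_dvd_of_mem_Abset {ι : Type*} [Fintype ι] {a b : ι → ℤ} {F : ℤ → ℤ}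
    (hF : ∀ n, F n = ∏ i, (a i * n + b i)) {z : ℝ} (hA : A ⊆ SFset F N z) {n : ℕ}
    (hn : n ∈ Abset A N M r) {p : ℕ} (hp : p.Prime) (hpz : (p : ℝ) ≤ z) (i : ι) :
    ¬ (p : ℤ) ∣ a i * (r + n * M) + b i := fun hdvd => by
  refine not_dvd_of_mem_SFset (hA (mem_filter.1 hn).2) hp hpz ?_
  rw [hF]
  push_cast
  exact hdvd.trans (dvd_prod_of_mem (fun i => a i * ((r : ℤ) + n * M) + b i) (mem_univ i))

theorem le_of_mem_Abset (hA : A ⊆ Icc 1 N) (hM : 0 < M) (hN : N ≤ P * M) {n : ℕ}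
    (hn : n ∈ Abset A N M r) : n ≤ P := by
  have hle := (mem_Icc.1 (hA (mem_filter.1 hn).2)).2
  exact Nat.le_of_mul_le_mul_right (by omega) hM

theorem exists_Abset_subset_Ico (hA : A ⊆ Icc 1 N) (hM : 0 < M) (hN : N ≤ P * M) :
    ∃ t, Abset A N M r ⊆ Ico t (t + P) := by
  rcases r.eq_zero_or_pos with rfl | hb
  · refine ⟨1, fun n hn => mem_Ico.2 ⟨Nat.pos_of_ne_zero ?_, ?_⟩⟩
    · rintro rfl
      simpa using hA (mem_filter.1 hn).2
    · exact Nat.lt_one_add_iff.2 (le_of_mem_Abset hA hM hN hn)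
  · refine ⟨0, fun n hn => mem_Ico.2 ⟨n.zero_le, ?_⟩⟩
    have hle := (mem_Icc.1 (hA (mem_filter.1 hn).2)).2
    rw [zero_add]
    exact Nat.lt_of_mul_lt_mul_right (a := M) (by omega)

theorem card_image_natCast_Abset (hA : A ⊆ Icc 1 N) (hM : 0 < M) (hN : N ≤ P * M) :
    #((Abset A N M r).image (Nat.cast : ℕ → ZMod P)) = #(Abset A N M r) := by
  obtain ⟨t, ht⟩ := exists_Abset_subset_Ico (r := r) hA hM hN
  exact card_image_of_injOn fun x hx y hy hxy => Nat.mod_injOn_Ico t P (ht hx) (ht hy)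
    ((ZMod.natCast_eq_natCast_iff' _ _ _).1 hxy)

end SiftedProgressions

section Transference

theorem one_le_mul_log_log_div_log_pow {N : ℕ} (hN : 1 ≤ N) (hlog : 2 ≤ Real.log (Real.log N))
    {P x : ℝ} (hP : (N : ℝ) ^ (1 / 2 : ℝ) ≤ P) {k m : ℕ} (hkm : k ≤ m)
    (hx : Real.log P ^ m ≤ x) : 1 ≤ x * (Real.log (Real.log N) / Real.log N) ^ k := by
  have hN₀ : (0 : ℝ) < N := mod_cast hN
  have hlogN : 2 ≤ Real.log N := hlog.trans (Real.log_le_self (Real.log_natCast_nonneg N))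
  have hlogP : Real.log N / 2 ≤ Real.log P := by
    have := Real.log_le_log (by positivity) hP
    rw [Real.log_rpow hN₀] at this
    linarith
  calc 1 ≤ (Real.log (Real.log N) / 2) ^ k := one_le_pow₀ (by linarith)
    _ = (Real.log N / 2) ^ k * (Real.log (Real.log N) / Real.log N) ^ k := by
        rw [← mul_pow]
        congr 1
        field_simp
    _ ≤ Real.log P ^ m * (Real.log (Real.log N) / Real.log N) ^ k := by
        gcongr
        exact (pow_le_pow_left₀ (by linarith) hlogP k).trans
          (pow_le_pow_right₀ (by linarith) hkm)
    _ ≤ _ := by gcongr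

theorem div_le_of_intCast_mul_div_le {c : ℤ} {x y P : ℝ} (hx : 0 ≤ x) (hy : 0 ≤ y) (hP : 0 < P)
    (hle : c * x / y ≤ P) (hge : P ≤ 2 * c * x / y) : 0 < c ∧ x / y ≤ P := by
  have hc : 0 < c := by
    by_contra! h
    have : (c : ℝ) * (x / y) ≤ 0 :=
      mul_nonpos_of_nonpos_of_nonneg (mod_cast h) (div_nonneg hx hy)
    rw [mul_assoc, mul_div_assoc, mul_div_assoc] at hge
    linarith
  refine ⟨hc, le_trans ?_ hle⟩
  rw [mul_div_assoc]
  exact le_mul_of_one_le_left (div_nonneg hx hy) (mod_cast hc)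

variable {P : ℕ} [Fact P.Prime]

theorem le_LamL_convP_fCfun {s : ℕ} (c : Fin s → ℤ) {h : ℝ → ℝ}
    (hh : ∀ η : ℝ, 0 < η → η ≤ 1 → ∀ A : Finset (ZMod P), η * P ≤ #A → h η * P ^ (s - 1) ≤
      #{x : Fin s → ZMod P | (∀ i, x i ∈ A) ∧ ∑ i, (c i : ZMod P) * x i = 0})
    {A : Finset ℕ} (hA : ∀ a ∈ A, a ≤ P) {B : Finset (ZMod P)} {l : ℕ} (hl : 2 ≤ l)
    {C D δ ρ : ℝ} (hC : 0 ≤ C) (hD : 0 < D) (hδ : 0 < δ) (hρ : 0 < ρ)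
    (hcardA : δ / D * ρ * P ≤ #(A.image (Nat.cast : ℕ → ZMod P))) (hcardB : 1 ≤ #B * ρ)
    (hR : ∀ T : Finset ℤ, #T = l → (∀ x ∈ T, ∀ y ∈ T, |x - y| ≤ 2 * P) →
      (#((range P).filter fun n : ℕ => ∀ x ∈ T, ∃ a ∈ A, (a : ℤ) = n - x) : ℝ) ≤
        C * P * ρ ^ l) :
    (1 / 2) ^ s * h (1 / (2 ^ l * max 1 (D ^ l * (4 ^ l * C + (2 * l) ^ l))) *
        δ ^ ((l : ℝ) / (l - 1))) * P ^ (s - 1) ≤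
      LamL c (convP (fCfun (A.image (Nat.cast : ℕ → ZMod P))) (fCfun B)) := by
  have hP : (0 : ℝ) < P := mod_cast NeZero.pos P
  have hA₀ : (A.image (Nat.cast : ℕ → ZMod P)).Nonempty :=
    card_pos.1 ((Nat.cast_pos (α := ℝ)).1 (lt_of_lt_of_le (by positivity) hcardA))
  have hB₀ : B.Nonempty :=
    card_pos.1 ((Nat.cast_pos (α := ℝ)).1 (pos_of_mul_pos_left (one_pos.trans_le hcardB) hρ.le))
  refine le_LamL_of_sum_pow_le c hh (convP_fCfun_nonneg _ B) (sum_convP_fCfun hA₀ hB₀)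
    (le_max_left _ _) hδ hl ?_
  calc ∑ n, convP (fCfun (A.image (Nat.cast : ℕ → ZMod P))) (fCfun B) n ^ l
      ≤ (4 ^ l * C + (2 * l) ^ l) * P / (δ / D) ^ l :=
        sum_convP_fCfun_pow_le hA hC (by positivity) hρ hcardA hcardB hR
    _ = D ^ l * (4 ^ l * C + (2 * l) ^ l) * P / δ ^ l := by
        rw [div_pow]
        field_simp
    _ ≤ _ := by gcongr; exact le_max_right _ _

end Transference

theorem stmt4_general
    (k : ℕ) (a b : Fin k → ℤ) (F : ℤ → ℤ) (hF : ∀ n : ℤ, F n = ∏ i, (a i * n + b i))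
    (hdisc : disc a b ≠ 0) (θ : ℝ) (hθ : 0 < θ) (s : ℕ) (cc : Fin s → ℤ) (hL : ℝ → ℝ)
    (hhL : ∀ (Q : ℕ) [Fact Q.Prime], ∀ η : ℝ, 0 < η → η ≤ 1 →
      ∀ A : Finset (ZMod Q), η * Q ≤ #A →
        hL η * Q ^ (s - 1) ≤
          #{x : Fin s → ZMod Q | (∀ i, x i ∈ A) ∧ ∑ i, (cc i : ZMod Q) * x i = 0})
    (c : ℤ) (c₀ : ℝ) (hc₀ : 0 < c₀) (m : ℕ) (hm : k ≤ m) (l : ℕ) (hl : 2 ≤ l) :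
    ∃ (c₁ c₂ : ℝ) (N₁ : ℕ), 0 < c₁ ∧ 0 < c₂ ∧ c₂ ≤ 1 ∧
      ∀ N : ℕ, N₁ ≤ N → ∀ A ⊆ SFset F N ((N : ℝ) ^ θ), ∀ δ : ℝ, 0 < δ → ∀ b₀ : ℕ,
        c₀ * δ * Real.log (Real.log N) ^ k / Real.log N ^ k * N / primor (Real.log N / 3) ≤
          #(Abset A N (primor (Real.log N / 3)) b₀) →
      ∀ (P : ℕ) [Fact P.Prime], c * N / primor (Real.log N / 3) ≤ (P : ℝ) →
        (P : ℝ) ≤ 2 * c * N / primor (Real.log N / 3) →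
      ∀ B : Finset (ZMod P), Real.log P ^ m ≤ #B →
        c₁ * hL (c₂ * δ ^ ((l : ℝ) / (l - 1))) * P ^ (s - 1) ≤
          LamL cc (convP (fCfun ((Abset A N (primor (Real.log N / 3)) b₀).image
            (Nat.cast : ℕ → ZMod P))) (fCfun B)) := by
  obtain ⟨C, hC, hsieve⟩ := exists_card_le_of_sifted_translates hdisc hθ (2 * c) l
  have hloglog := Real.tendsto_log_atTop.comp tendsto_log_natCast
  obtain ⟨N₁, hN₁⟩ := eventually_atTop.1
    (hsieve.and ((eventually_ge_atTop 1).and (hloglog.eventually_ge_atTop 2)))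
  set K := max 1 ((2 * c / c₀) ^ l * (4 ^ l * C + (2 * l) ^ l))
  have hK₁ : 1 ≤ K := le_max_left _ _
  refine ⟨(1 / 2) ^ s, 1 / (2 ^ l * K), N₁, by positivity, by positivity,
    div_le_one_of_le₀ (one_le_mul_of_one_le_of_one_le (one_le_pow₀ one_le_two) hK₁)
      (by positivity), fun N hN A hA δ hδ b₀ hAb P _ hP₁ hP₂ B hB => ?_⟩
  obtain ⟨hsieve, hN, hlog⟩ := hN₁ N hN
  set M := primor (Real.log N / 3)
  set ρ := (Real.log (Real.log N) / Real.log N) ^ k with hρ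
  have hM : 0 < M := primor_pos _
  have hP : (0 : ℝ) < P := mod_cast NeZero.pos P
  have hA₁ : A ⊆ Icc 1 N := hA.trans (filter_subset _ _)
  obtain ⟨hc, hNP⟩ := div_le_of_intCast_mul_div_le (by positivity) (by positivity) hP hP₁ hP₂
  have hNPM : N ≤ P * M := mod_cast (div_le_iff₀ (by positivity)).1 hNP
  have hcardB : 1 ≤ #B * ρ :=
    one_le_mul_log_log_div_log_pow hN hlog (rpow_half_le_of_div_primor_le hN hNP) hm hB
  have hρ₀ : 0 < ρ := pos_of_mul_pos_right (one_pos.trans_le hcardB) (Nat.cast_nonneg _)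
  have hcardA : δ / (2 * c / c₀) * ρ * P ≤
      #((Abset A N M b₀).image (Nat.cast : ℕ → ZMod P)) := by
    rw [card_image_natCast_Abset hA₁ hM hNPM]
    refine le_trans ?_ hAb
    calc δ / (2 * c / c₀) * ρ * P ≤ δ / (2 * c / c₀) * ρ * (2 * c * N / M) := by gcongr
      _ = _ := by rw [hρ, div_pow]; field_simp
  refine le_LamL_convP_fCfun cc (hhL P) (fun n hn => le_of_mem_Abset hA₁ hM hNPM hn) hl hC
    (by positivity) hδ hρ₀ hcardA hcardB fun T hTl hT => ?_
  rw [hρ, ← pow_mul]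
  simpa only [Fintype.card_fin] using hsieve P hNP hP₂ b₀ T hTl hT _ (filter_subset _ _)
    fun n hn x hx i p hp _ hpN => by
      obtain ⟨n', hn', hcast⟩ := (mem_filter.1 hn).2 x hx
      rw [← hcast]
      exact not_dvd_of_mem_Abset hF hA hn' hp hpN i

theorem stmt4
    (k : ℕ) (hk : 1 ≤ k) (a b : Fin k → ℤ) (ha : ∀ i, a i ≠ 0)
    (F : ℤ → ℤ) (hF : ∀ n : ℤ, F n = ∏ i, (a i * n + b i))
    (hdisc : (∏ i, a i) *
      ∏ i, ∏ j ∈ Finset.univ.filter (fun j => j ≠ i), (a i * b j - b i * a j) ≠ 0)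
    (hadm : ∀ p : ℕ, p.Prime → ∃ n : ℤ, ¬ ((p : ℤ) ∣ F n))
    (s : ℕ) (cc : Fin s → ℤ) (hcc : ∀ i, cc i ≠ 0) (hti : ∑ i, cc i = 0)
    (hL : ℝ → ℝ) (hLnn : ∀ η : ℝ, 0 < η → η ≤ 1 → 0 ≤ hL η)
    (hhL : ∀ (Q : ℕ) [Fact Q.Prime], ∀ η : ℝ, 0 < η → η ≤ 1 →
      ∀ A : Finset (ZMod Q), η * (Q : ℝ) ≤ (A.card : ℝ) →
        hL η * (Q : ℝ) ^ (s - 1) ≤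
          ((Finset.univ.filter (fun x : Fin s → ZMod Q =>
            (∀ i, x i ∈ A) ∧ ∑ i, (cc i : ZMod Q) * x i = 0)).card : ℝ))
    (c₀ : ℝ) (hc₀ : 0 < c₀)
    (l : ℕ) (hl : 2 ≤ l) :
    ∃ (c₁ c₂ : ℝ) (N₁ : ℕ), 0 < c₁ ∧ 0 < c₂ ∧ c₂ ≤ 1 ∧
      ∀ N : ℕ, N₁ ≤ N →
      ∀ A : Finset ℕ, A ⊆ SFset F N ((N : ℝ) ^ ((1 : ℝ) / (4 * k + 1))) →
      ∀ δ : ℝ, 0 < δ →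
        (A.card : ℝ) = δ * ((SFset F N ((N : ℝ) ^ ((1 : ℝ) / (4 * k + 1)))).card : ℝ) →
      ∀ b₀ : ℕ, b₀ < primor (Real.log N / 3) →
        Int.gcd (F b₀) (primor (Real.log N / 3)) = 1 →
        c₀ * δ * (Real.log (Real.log N)) ^ k / (Real.log N) ^ k *
            (N : ℝ) / (primor (Real.log N / 3) : ℝ)
          ≤ ((Abset A N (primor (Real.log N / 3)) b₀).card : ℝ) →
      ∀ (P : ℕ) [Fact P.Prime],
        ((∑ i ∈ Finset.univ.filter (fun i => 0 < cc i), cc i : ℤ) : ℝ) *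
            (N : ℝ) / (primor (Real.log N / 3) : ℝ) ≤ (P : ℝ) →
        (P : ℝ) ≤ 2 * ((∑ i ∈ Finset.univ.filter (fun i => 0 < cc i), cc i : ℤ) : ℝ) *
            (N : ℝ) / (primor (Real.log N / 3) : ℝ) →
        (Real.log P) ^ (-(100 : ℝ)) < δ →
        ∀ B₀ : Finset ℤ, (∀ x ∈ B₀, 4 * |x| ≤ (P : ℤ)) →
          ∀ B : Finset (ZMod P),
            B = B₀.image (fun x : ℤ => (x : ZMod P)) →
            (Real.log P) ^ (k + 101) ≤ (B.card : ℝ) →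
            c₁ * hL (c₂ * δ ^ ((l : ℝ) / ((l : ℝ) - 1))) * (P : ℝ) ^ (s - 1) ≤
              LamL cc (convP
                (fCfun ((Abset A N (primor (Real.log N / 3)) b₀).image
                  (fun n : ℕ => (n : ZMod P))))
                (fCfun B)) := by
  obtain ⟨c₁, c₂, N₁, hc₁, hc₂, hc₂', h⟩ := stmt4_general k a b F hF hdisc (1 / (4 * k + 1))
    (by positivity) s cc hL hhL (∑ i with 0 < cc i, cc i) c₀ hc₀ (k + 101) (by omega) l hl
  exact ⟨c₁, c₂, N₁, hc₁, hc₂, hc₂', fun N hN A hA δ hδ _ b₀ _ _ hAb P _ hP₁ hP₂ _ _ _ B _ hB =>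
    h N hN A hA δ hδ b₀ hAb P hP₁ hP₂ B hB⟩
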